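/- arXiv:2508.17459 — 10 statements merged into one kernel-verified Lean document; each statement's English description precedes it below -/
import Mathlib

section
/- For every integer n ≥ 2, the number of partitions of n in which the smallest part occurs exactly twice and all other parts are distinct satisfies s_2(n) + q(n) = 2·q(n-1); equivalently, s_2(n) = 2q(n-1) − q(n). -/
/-!
Let `T` be the set of pairs `(m, F)` where `m ≥ 1`, `F` is a finite set of integers `≥ m`, and
`m + ∑ F = n`.  It is counted in two ways.

* By whether `m ∈ F`: the pairs with `m ∈ F` are the partitions counted by `s 2 n` (adjoin `m` to
  `F` as a second copy, `card_pairs_mem`), and those with `m ∉ F` are the partitions of `n` into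
  distinct parts with least part `m` (`card_pairs_lt`).
* By whether `m = 1`: the pairs `(1, F)` are all the partitions `F` of `n - 1` into distinct parts
  (`card_pairs_one`), and for `m ≥ 2` the set `{m - 1} ∪ F` is an arbitrary partition of `n - 1`
  into distinct parts, with least part `m - 1` (`card_pairs_two`).  Here `n - 1 ≥ 1` is needed,
  since the empty partition has no least part.
-/

/-- `q n` is the number of partitions of `n` into distinct parts. -/
noncomputable def q (n : ℕ) : ℕ := Nat.card {p : n.Partition // p.parts.Nodup}

/-- A partition has its smallest part repeated exactly `k` times and all
other parts occurring exactly once. -/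
def IsSmallestRep (k : ℕ) {n : ℕ} (p : n.Partition) : Prop :=
  ∃ m ∈ p.parts, (∀ a ∈ p.parts, m ≤ a) ∧ p.parts.count m = k ∧
    ∀ a ∈ p.parts, a ≠ m → p.parts.count a = 1

/-- `s k n` counts partitions of `n` whose smallest part occurs exactly `k`
times and whose other parts are distinct. -/
noncomputable def s (k n : ℕ) : ℕ := Nat.card {p : n.Partition // IsSmallestRep k p}

/-- A partition has its largest part repeated exactly `k` times and all
other parts occurring exactly once. -/
def IsLargestRep (k : ℕ) {n : ℕ} (p : n.Partition) : Prop :=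
  ∃ m ∈ p.parts, (∀ a ∈ p.parts, a ≤ m) ∧ p.parts.count m = k ∧
    ∀ a ∈ p.parts, a ≠ m → p.parts.count a = 1

/-- `l k n` counts partitions of `n` whose largest part occurs exactly `k`
times and whose other parts are distinct. -/
noncomputable def l (k n : ℕ) : ℕ := Nat.card {p : n.Partition // IsLargestRep k p}


/-- Pairs `(m, F)` with `1 ≤ m`, all elements of `F` at least `m`, and total `m + ∑ F = n`. -/
def IsPair (n : ℕ) (x : ℕ × Finset ℕ) : Prop :=
  1 ≤ x.1 ∧ (∀ a ∈ x.2, x.1 ≤ a) ∧ x.1 + ∑ a ∈ x.2, a = n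

lemma card_finsets (n : ℕ) :
    Nat.card {F : Finset ℕ // 0 ∉ F ∧ ∑ a ∈ F, a = n} = q n := by
  symm
  refine Nat.card_eq_of_bijective
    (fun p => ⟨⟨p.1.parts, p.2⟩, fun h => (p.1.parts_pos h).ne rfl, ?_⟩) ⟨?_, ?_⟩
  · simpa [Finset.sum] using p.1.parts_sum
  · rintro ⟨p, hp⟩ ⟨p', hp'⟩ h
    simp only [Subtype.mk.injEq, Finset.mk.injEq] at h
    exact Subtype.ext (Nat.Partition.ext h)
  · rintro ⟨F, h0, hF⟩
    refine ⟨⟨⟨F.val, fun {i} hi => Nat.pos_of_ne_zero ?_, ?_⟩, F.nodup⟩, rfl⟩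
    · rintro rfl
      exact h0 hi
    · exact (Finset.sum_val F).trans hF

/-- Splitting off the least part: for `n ≥ 1`, a partition of `n` into distinct parts is a positive
integer `m` together with a finite set of integers larger than `m`. -/
lemma card_pairs_lt (n : ℕ) (hn : 1 ≤ n) :
    Nat.card {x : ℕ × Finset ℕ // IsPair n x ∧ x.1 ∉ x.2} = q n := by
  rw [← card_finsets]
  refine Nat.card_eq_of_bijective
    (fun x => ⟨insert x.1.1 x.1.2, ?_, ?_⟩) ⟨?_, ?_⟩
  · obtain ⟨⟨m, F⟩, ⟨h1, h2, h3⟩, h4⟩ := x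
    simp only [Finset.mem_insert, not_or]
    refine ⟨by simp only at h1; omega, fun h => ?_⟩
    have := h2 0 h
    simp only at h1 this
    omega
  · obtain ⟨⟨m, F⟩, ⟨h1, h2, h3⟩, h4⟩ := x
    rw [Finset.sum_insert h4]
    exact h3
  · rintro ⟨⟨m, F⟩, ⟨h1, h2, h3⟩, h4⟩ ⟨⟨m', F'⟩, ⟨h1', h2', h3'⟩, h4'⟩ h
    simp only [Subtype.mk.injEq] at h h1 h2 h3 h4 h1' h2' h3' h4'
    have hm : m = m' := by
      have e1 : m ∈ insert m' F' := h ▸ Finset.mem_insert_self m F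
      have e2 : m' ∈ insert m F := h ▸ Finset.mem_insert_self m' F'
      rw [Finset.mem_insert] at e1 e2
      rcases e1 with e1 | e1
      · exact e1
      rcases e2 with e2 | e2
      · exact e2.symm
      exact le_antisymm (h2 _ e2) (h2' _ e1)
    subst hm
    have hF : F = F' := by
      rw [← Finset.erase_insert h4, h, Finset.erase_insert h4']
    subst hF
    rfl
  · rintro ⟨F, h0, hF⟩
    have hne : F.Nonempty := by
      rw [Finset.nonempty_iff_ne_empty]
      rintro rfl
      simp at hF
      omega
    have hmem := F.min'_mem hne
    refine ⟨⟨(F.min' hne, F.erase (F.min' hne)), ⟨?_, ?_, ?_⟩, ?_⟩, ?_⟩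
    · refine Nat.one_le_iff_ne_zero.2 fun h => h0 ?_
      simp only at h
      rwa [h] at hmem
    · exact fun a ha => F.min'_le a (Finset.mem_of_mem_erase ha)
    · exact (Finset.add_sum_erase F (fun a => a) hmem).trans hF
    · exact Finset.notMem_erase _ _
    · exact Subtype.ext (Finset.insert_erase hmem)

lemma card_pairs_mem (n : ℕ) :
    Nat.card {x : ℕ × Finset ℕ // IsPair n x ∧ x.1 ∈ x.2} = s 2 n := by
  refine Nat.card_eq_of_bijective
    (fun x => ⟨⟨x.1.1 ::ₘ x.1.2.val, ?_, ?_⟩, ?_⟩) ⟨?_, ?_⟩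
  · obtain ⟨⟨m, F⟩, ⟨h1, h2, h3⟩, h4⟩ := x
    intro i hi
    rcases Multiset.mem_cons.1 hi with rfl | hi
    · exact h1
    · exact lt_of_lt_of_le h1 (h2 i hi)
  · obtain ⟨⟨m, F⟩, ⟨h1, h2, h3⟩, h4⟩ := x
    exact (Multiset.sum_cons _ _).trans ((congrArg (m + ·) (Finset.sum_val F)).trans h3)
  · obtain ⟨⟨m, F⟩, ⟨h1, h2, h3⟩, h4⟩ := x
    refine ⟨m, Multiset.mem_cons_self _ _, fun a ha => ?_, ?_, fun a ha hne => ?_⟩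
    · rcases Multiset.mem_cons.1 ha with rfl | ha
      · exact le_rfl
      · exact h2 a ha
    · simp only [Multiset.count_cons_self]
      rw [Multiset.count_eq_one_of_mem F.nodup h4]
    · simp only [Multiset.count_cons_of_ne hne]
      exact Multiset.count_eq_one_of_mem F.nodup ((Multiset.mem_cons.1 ha).resolve_left hne)
  · rintro ⟨⟨m, F⟩, ⟨h1, h2, h3⟩, h4⟩ ⟨⟨m', F'⟩, ⟨h1', h2', h3'⟩, h4'⟩ h
    simp only [Subtype.mk.injEq, Nat.Partition.mk.injEq] at h h1 h2 h3 h4 h1' h2' h3' h4'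
    have hm : m = m' := by
      have e1 : m ∈ m' ::ₘ F'.val := h ▸ Multiset.mem_cons_self m F.val
      have e2 : m' ∈ m ::ₘ F.val := h ▸ Multiset.mem_cons_self m' F'.val
      rw [Multiset.mem_cons] at e1 e2
      rcases e1 with e1 | e1
      · exact e1
      rcases e2 with e2 | e2
      · exact e2.symm
      exact le_antisymm (h2 _ e2) (h2' _ e1)
    subst hm
    have hF : F = F' := Finset.val_injective ((Multiset.cons_inj_right m).1 h)
    subst hF
    rfl
  · rintro ⟨p, m, hm, hle, h2, h1⟩
    have hnd : (p.parts.erase m).Nodup := by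
      rw [Multiset.nodup_iff_count_le_one]
      intro a
      by_cases ha : a = m
      · subst ha
        rw [Multiset.count_erase_self, h2]
      · rw [Multiset.count_erase_of_ne ha]
        by_cases hap : a ∈ p.parts
        · exact (h1 a hap ha).le
        · simp [Multiset.count_eq_zero_of_notMem hap]
    have hcons := Multiset.cons_erase hm
    refine ⟨⟨(m, ⟨p.parts.erase m, hnd⟩), ⟨p.parts_pos hm, ?_, ?_⟩, ?_⟩, ?_⟩
    · exact fun a ha => hle a (Multiset.mem_of_mem_erase ha)
    · have := p.parts_sum
      rw [← hcons] at this
      simpa [Finset.sum] using this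
    · change m ∈ p.parts.erase m
      rw [← Multiset.count_pos, Multiset.count_erase_self, h2]
      norm_num
    · exact Subtype.ext (Nat.Partition.ext hcons)

lemma card_pairs_one (n : ℕ) (hn : 1 ≤ n) :
    Nat.card {x : ℕ × Finset ℕ // IsPair n x ∧ x.1 = 1} = q (n - 1) := by
  rw [← card_finsets]
  refine Nat.card_eq_of_bijective (fun x => ⟨x.1.2, ?_, ?_⟩) ⟨?_, ?_⟩
  · obtain ⟨⟨m, F⟩, ⟨h1, h2, h3⟩, h4⟩ := x
    intro h
    have := h2 0 h
    simp only at h1 this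
    omega
  · obtain ⟨⟨m, F⟩, ⟨h1, h2, h3⟩, h4⟩ := x
    simp only at h3 h4 ⊢
    omega
  · rintro ⟨⟨m, F⟩, hx, h4⟩ ⟨⟨m', F'⟩, hx', h4'⟩ h
    simp only [Subtype.mk.injEq] at h h4 h4'
    subst h h4 h4'
    rfl
  · rintro ⟨F, h0, hF⟩
    refine ⟨⟨(1, F), ⟨le_rfl, fun a ha => ?_, ?_⟩, rfl⟩, rfl⟩
    · refine Nat.one_le_iff_ne_zero.2 ?_
      rintro rfl
      exact h0 ha
    · simp only
      omega

/-- Lowering `m` to `m - 1` turns the condition "all elements of `F` are at least `m`" into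
"all elements of `F` exceed `m - 1`". -/
lemma card_pairs_two (n : ℕ) (hn : 2 ≤ n) :
    Nat.card {x : ℕ × Finset ℕ // IsPair n x ∧ ¬ x.1 = 1} = q (n - 1) := by
  rw [← card_pairs_lt (n - 1) (by omega)]
  refine Nat.card_eq_of_bijective
    (fun x => ⟨(x.1.1 - 1, x.1.2), ⟨?_, ?_, ?_⟩, ?_⟩) ⟨?_, ?_⟩
  · obtain ⟨⟨m, F⟩, ⟨h1, h2, h3⟩, h4⟩ := x
    simp only at h1 h4 ⊢
    omega
  · obtain ⟨⟨m, F⟩, ⟨h1, h2, h3⟩, h4⟩ := x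
    exact fun a ha => (Nat.sub_le _ _).trans (h2 a ha)
  · obtain ⟨⟨m, F⟩, ⟨h1, h2, h3⟩, h4⟩ := x
    simp only at h1 h3 ⊢
    omega
  · obtain ⟨⟨m, F⟩, ⟨h1, h2, h3⟩, h4⟩ := x
    intro h
    have := h2 _ h
    simp only at h1 this
    omega
  · rintro ⟨⟨m, F⟩, ⟨h1, h2, h3⟩, h4⟩ ⟨⟨m', F'⟩, ⟨h1', h2', h3'⟩, h4'⟩ h
    simp only [Subtype.mk.injEq, Prod.mk.injEq] at h h1 h1' ⊢
    exact ⟨by omega, h.2⟩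
  · rintro ⟨⟨m, F⟩, ⟨h1, h2, h3⟩, h4⟩
    simp only at h1 h2 h3 h4
    refine ⟨⟨(m + 1, F), ⟨by simp, fun a ha => ?_, ?_⟩, ?_⟩, rfl⟩
    · exact lt_of_le_of_ne (h2 a ha) (by rintro rfl; exact h4 ha)
    · simp only
      omega
    · simp only
      omega

lemma card_split (n : ℕ) (P : ℕ × Finset ℕ → Prop) :
    Nat.card {x : ℕ × Finset ℕ // IsPair n x} =
      Nat.card {x : ℕ × Finset ℕ // IsPair n x ∧ P x} +
        Nat.card {x : ℕ × Finset ℕ // IsPair n x ∧ ¬ P x} := by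
  have hfin : {x : ℕ × Finset ℕ | IsPair n x}.Finite := by
    refine (Finset.finite_toSet
      (Finset.range (n + 1) ×ˢ (Finset.range (n + 1)).powerset)).subset ?_
    rintro ⟨m, F⟩ ⟨h1, h2, h3⟩
    simp only at h3
    simp only [Finset.coe_product, Set.mem_prod, Finset.mem_coe, Finset.mem_range,
      Finset.mem_powerset]
    refine ⟨by omega, fun a ha => ?_⟩
    have := Finset.single_le_sum (f := fun a : ℕ => a) (fun _ _ => Nat.zero_le _) ha
    rw [Finset.mem_range]
    omega
  have h := Set.ncard_inter_add_ncard_sdiff_eq_ncard {x | IsPair n x} {x | P x} hfin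
  exact h.symm

theorem s2_eq (n : ℕ) (hn : 2 ≤ n) :
    s 2 n + q n = 2 * q (n - 1) := by
  have h1 := card_split n (fun x => x.1 ∈ x.2)
  have h2 := card_split n (fun x => x.1 = 1)
  rw [card_pairs_mem, card_pairs_lt n (by omega)] at h1
  rw [card_pairs_one n (by omega), card_pairs_two n hn] at h2
  omega
end

section
/- For every integer n ≥ 4, the number of partitions of n in which the smallest part occurs exactly three times and all other parts are distinct satisfies s_3(n) + 2·q(n-1) = 2·q(n-3) + q(n); equivalently, s_3(n) = 2q(n-3) − 2q(n-1) + q(n). -/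
/-- Finite sets of positive integers with sum `n`; these encode the partitions of `n` into
distinct parts. -/
def distinctSets (n : ℕ) : Set (Finset ℕ) :=
  {S | (∀ a ∈ S, 0 < a) ∧ ∑ a ∈ S, a = n}

/-- Pairs `(m, S)` with `b ≤ m`, all elements of `S` larger than `m`, and `k * m + ∑ S = n`.
For `b = 1` and `1 ≤ k` the pair encodes the partition with smallest part `m`, repeated `k` times,
and remaining parts `S`; the case `b = 0` additionally allows `m = 0`. -/
def repPairs (b k n : ℕ) : Set (ℕ × Finset ℕ) :=
  {x | b ≤ x.1 ∧ (∀ a ∈ x.2, x.1 < a) ∧ k * x.1 + ∑ a ∈ x.2, a = n}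

/-- Pairs `(m, S)` as in `repPairs 1 k n`, except that `m` itself may belong to `S`. -/
def weakPairs (k n : ℕ) : Set (ℕ × Finset ℕ) :=
  {x | 1 ≤ x.1 ∧ (∀ a ∈ x.2, x.1 ≤ a) ∧ k * x.1 + ∑ a ∈ x.2, a = n}

lemma finite_pairs (k n : ℕ) (hk : 1 ≤ k) :
    {x : ℕ × Finset ℕ | k * x.1 + ∑ a ∈ x.2, a = n}.Finite := by
  apply (Finset.finite_toSet
    (Finset.range (n + 1) ×ˢ (Finset.range (n + 1)).powerset)).subset
  rintro ⟨m, S⟩ h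
  simp only [Set.mem_ofPred_eq] at h
  simp only [Finset.coe_product, Set.mem_prod, Finset.mem_coe, Finset.mem_range,
    Finset.mem_powerset]
  have h1 : m ≤ k * m := Nat.le_mul_of_pos_left m hk
  refine ⟨by omega, fun a ha => ?_⟩
  have h2 : a ≤ ∑ a ∈ S, a := Finset.single_le_sum (f := fun a => a) (by simp) ha
  simp only [Finset.mem_range]
  omega

lemma finite_repPairs (b k n : ℕ) (hk : 1 ≤ k) : (repPairs b k n).Finite :=
  (finite_pairs k n hk).subset fun _ h => h.2.2

lemma q_eq_ncard (n : ℕ) : q n = (distinctSets n).ncard := by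
  rw [q, ← Nat.card_coe_set_eq]
  refine Nat.card_eq_of_bijective
    (fun p => ⟨p.1.parts.toFinset, fun a ha => p.1.parts_pos (by simpa using ha), ?_⟩) ⟨?_, ?_⟩
  · have h := p.1.parts_sum
    conv_rhs => rw [← h]
    rw [Finset.sum_eq_multiset_sum, Multiset.toFinset_val, p.2.dedup, Multiset.map_id']
  · rintro ⟨p, hp⟩ ⟨p', hp'⟩ h
    have h2 := congrArg (fun x => x.1.val) h
    simp only [Multiset.toFinset_val, hp.dedup, hp'.dedup] at h2
    exact Subtype.ext (Nat.Partition.ext h2)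
  · rintro ⟨S, hS, hsum⟩
    refine ⟨⟨⟨S.val, fun {a} ha => hS a ha, ?_⟩, S.nodup⟩, ?_⟩
    · rw [← hsum, Finset.sum_eq_multiset_sum, Multiset.map_id']
    · simp

lemma s_eq_ncard (k n : ℕ) (hk : 1 ≤ k) : s k n = (repPairs 1 k n).ncard := by
  rw [s, ← Nat.card_coe_set_eq]
  symm
  have count_S : ∀ (S : Finset ℕ) (a : ℕ), S.val.count a = if a ∈ S then 1 else 0 := by
    intro S a
    exact Multiset.count_eq_of_nodup S.nodup
  refine Nat.card_eq_of_bijective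
    (fun x => ⟨⟨Multiset.replicate k x.1.1 + x.1.2.val, ?_, ?_⟩, x.1.1, ?_, ?_, ?_, ?_⟩) ⟨?_, ?_⟩
  · obtain ⟨⟨m, S⟩, hm, hS, hsum⟩ := x
    simp only at hm hS ⊢
    intro a ha
    rcases Multiset.mem_add.1 ha with h | h
    · rw [Multiset.eq_of_mem_replicate h]; omega
    · have := hS a h; omega
  · obtain ⟨⟨m, S⟩, hm, hS, hsum⟩ := x
    simp only at hsum ⊢
    rw [← hsum, Finset.sum_eq_multiset_sum, Multiset.map_id']
    simp
  · obtain ⟨⟨m, S⟩, hm, hS, hsum⟩ := x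
    simp [Multiset.mem_replicate]
    omega
  · obtain ⟨⟨m, S⟩, hm, hS, hsum⟩ := x
    simp only at hm hS ⊢
    intro a ha
    rcases Multiset.mem_add.1 ha with h | h
    · rw [Multiset.eq_of_mem_replicate h]
    · exact (hS a h).le
  · obtain ⟨⟨m, S⟩, hm, hS, hsum⟩ := x
    have : m ∉ S := fun h => lt_irrefl _ (hS m h)
    simp [this]
  · obtain ⟨⟨m, S⟩, hm, hS, hsum⟩ := x
    simp only at hm hS ⊢
    intro a ha hne
    rcases Multiset.mem_add.1 ha with h | h
    · exact absurd (Multiset.eq_of_mem_replicate h) hne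
    · have h' : a ∈ S := h
      simp [count_S, h', Multiset.count_replicate, hne.symm]
  · rintro ⟨⟨m, S⟩, hm, hS, hsum⟩ ⟨⟨m', S'⟩, hm', hS', hsum'⟩ h
    replace h : Multiset.replicate k m + S.val = Multiset.replicate k m' + S'.val :=
      congrArg (fun x => x.1.parts) h
    simp only at hS' hS
    -- Each of `m`, `m'` is a part of the common partition, hence bounds the other from above.
    have h1 : m' ≤ m := by
      have : m ∈ Multiset.replicate k m' + S'.val := by
        rw [← h]; simp [Multiset.mem_replicate]; omega
      rcases Multiset.mem_add.1 this with h | h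
      · exact (Multiset.eq_of_mem_replicate h).ge
      · exact (hS' _ h).le
    have h2 : m ≤ m' := by
      have : m' ∈ Multiset.replicate k m + S.val := by
        rw [h]; simp [Multiset.mem_replicate]; omega
      rcases Multiset.mem_add.1 this with h | h
      · exact (Multiset.eq_of_mem_replicate h).ge
      · exact (hS _ h).le
    obtain rfl : m = m' := le_antisymm h2 h1
    obtain rfl : S = S' := Finset.val_injective (add_left_cancel h)
    rfl
  · rintro ⟨p, m, hm, hmin, hcount, hone⟩
    have key : Multiset.replicate k m + (p.parts.toFinset.erase m).val = p.parts := by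
      ext a
      rw [Multiset.count_add, count_S, Multiset.count_replicate]
      by_cases ha : m = a
      · subst ha; simp [hcount]
      · by_cases h : a ∈ p.parts
        · simp [ha, Ne.symm ha, h, hone a h (Ne.symm ha)]
        · simp [ha, h]
    refine ⟨⟨(m, p.parts.toFinset.erase m), p.parts_pos hm, ?_, ?_⟩, ?_⟩
    · intro a ha
      simp only [Finset.mem_erase, Multiset.mem_toFinset] at ha
      exact lt_of_le_of_ne (hmin a ha.2) (Ne.symm ha.1)
    · have := congrArg Multiset.sum key
      rw [p.parts_sum] at this
      refine Eq.trans ?_ this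
      rw [Finset.sum_eq_multiset_sum, Multiset.map_id']
      simp
    · exact Subtype.ext (Nat.Partition.ext key)

/-- A nonempty set of positive integers is its minimum together with a set of larger numbers. -/
lemma s_one (n : ℕ) (hn : 1 ≤ n) : s 1 n = q n := by
  rw [s_eq_ncard 1 n le_rfl, q_eq_ncard]
  refine Set.ncard_congr (fun x _ => insert x.1 x.2) ?_ ?_ ?_
  · rintro ⟨m, S⟩ ⟨hm, hS, hsum⟩
    simp only at hm hS hsum ⊢
    have hmS : m ∉ S := fun h => lt_irrefl _ (hS m h)
    refine ⟨fun a ha => ?_, ?_⟩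
    · rcases Finset.mem_insert.1 ha with rfl | h
      · exact hm
      · exact (Nat.zero_le _).trans_lt (hS a h)
    · rw [Finset.sum_insert hmS]; omega
  · rintro ⟨m, S⟩ ⟨m', S'⟩ ⟨hm, hS, hsum⟩ ⟨hm', hS', hsum'⟩ h
    simp only at hS hS' h
    have hmS : m ∉ S := fun h => lt_irrefl _ (hS m h)
    have hmS' : m' ∉ S' := fun h => lt_irrefl _ (hS' m' h)
    have h1 : m' ≤ m := by
      rcases Finset.mem_insert.1 (h ▸ Finset.mem_insert_self m S) with h | h
      · exact h.ge
      · exact (hS' _ h).le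
    have h2 : m ≤ m' := by
      rcases Finset.mem_insert.1 (h.symm ▸ Finset.mem_insert_self m' S') with h | h
      · exact h.ge
      · exact (hS _ h).le
    obtain rfl : m = m' := le_antisymm h2 h1
    rw [← Finset.erase_insert hmS, h, Finset.erase_insert hmS']
  · rintro S ⟨hS, hsum⟩
    have hne : S.Nonempty := by
      rw [Finset.nonempty_iff_ne_empty]
      rintro rfl
      simp at hsum
      omega
    have hmem := S.min'_mem hne
    refine ⟨(S.min' hne, S.erase (S.min' hne)), ⟨hS _ hmem, fun a ha => ?_, ?_⟩,
      Finset.insert_erase hmem⟩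
    · exact S.min'_lt_of_mem_erase_min' hne ha
    · have := Finset.add_sum_erase S (fun a => a) hmem
      simp only at this ⊢
      omega

/-- Splitting `weakPairs` according to whether `m ∈ S`. When `m ∈ S`, moving that copy of `m` out
of `S` raises the multiplicity from `k` to `k + 1`. -/
lemma ncard_weakPairs (k n : ℕ) (hk : 1 ≤ k) :
    (weakPairs k n).ncard = (repPairs 1 (k + 1) n).ncard + (repPairs 1 k n).ncard := by
  have himg : ((fun x : ℕ × Finset ℕ => (x.1, insert x.1 x.2)) '' repPairs 1 (k + 1) n).ncard
      = (repPairs 1 (k + 1) n).ncard := by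
    refine Set.InjOn.ncard_image ?_
    rintro ⟨m, S⟩ ⟨hm, hS, hsum⟩ ⟨m', S'⟩ ⟨hm', hS', hsum'⟩ h
    simp only [Prod.mk.injEq] at h hS hS'
    obtain ⟨rfl, h⟩ := h
    have hmS : m ∉ S := fun h => lt_irrefl _ (hS m h)
    have hmS' : m ∉ S' := fun h => lt_irrefl _ (hS' m h)
    rw [← Finset.erase_insert hmS, h, Finset.erase_insert hmS']
  rw [← himg, ← Set.ncard_union_eq ?_ ((finite_repPairs _ _ _ (by omega)).image _)
    (finite_repPairs _ _ _ hk)]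
  · congr 1
    ext ⟨m, S⟩
    constructor
    · rintro ⟨hm, hS, hsum⟩
      simp only at hm hS hsum
      by_cases hmS : m ∈ S
      · left
        refine ⟨(m, S.erase m), ⟨hm, fun a ha => ?_, ?_⟩, ?_⟩
        · obtain ⟨h1, h2⟩ := Finset.mem_erase.1 ha
          exact lt_of_le_of_ne (hS a h2) (Ne.symm h1)
        · have := Finset.add_sum_erase S (fun a => a) hmS
          simp only at this ⊢
          rw [add_mul]
          omega
        · simp [Finset.insert_erase hmS]
      · right
        exact ⟨hm, fun a ha => lt_of_le_of_ne (hS a ha) (by rintro rfl; exact hmS ha), hsum⟩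
    · rintro (⟨⟨m', S'⟩, ⟨hm, hS, hsum⟩, h⟩ | ⟨hm, hS, hsum⟩)
      · simp only [Prod.mk.injEq] at h hm hS hsum
        obtain ⟨rfl, rfl⟩ := h
        have hmS : m' ∉ S' := fun h => lt_irrefl _ (hS m' h)
        refine ⟨hm, fun a ha => ?_, ?_⟩
        · rcases Finset.mem_insert.1 ha with rfl | h
          · exact le_rfl
          · exact (hS a h).le
        · simp only [Finset.sum_insert hmS]
          rw [add_mul] at hsum
          omega
      · exact ⟨hm, fun a ha => (hS a ha).le, hsum⟩
  · rw [Set.disjoint_left]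
    rintro _ ⟨⟨m, S⟩, _, rfl⟩ ⟨_, hS, _⟩
    exact lt_irrefl _ (hS m (Finset.mem_insert_self m S))

/-- Replacing `m` by `m - 1` turns the condition `m ≤ a` into `m - 1 < a`. -/
lemma weakPairs_eq_image (k n : ℕ) (hkn : k ≤ n) :
    weakPairs k n = (fun x : ℕ × Finset ℕ => (x.1 + 1, x.2)) '' repPairs 0 k (n - k) := by
  ext ⟨m, S⟩
  constructor
  · rintro ⟨hm, hS, hsum⟩
    simp only at hm hS hsum
    obtain ⟨m, rfl⟩ := Nat.exists_eq_add_of_le' hm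
    refine ⟨(m, S), ⟨Nat.zero_le _, fun a ha => hS a ha, ?_⟩, rfl⟩
    rw [mul_add] at hsum
    simp only
    omega
  · rintro ⟨⟨m', S'⟩, ⟨_, hS, hsum⟩, h⟩
    simp only [Prod.mk.injEq] at h hS hsum
    obtain ⟨rfl, rfl⟩ := h
    refine ⟨by simp, fun a ha => hS a ha, ?_⟩
    simp only [mul_add]
    omega

/-- The pairs with `m = 0` are the partitions into distinct parts. -/
lemma ncard_repPairs_zero (k n : ℕ) (hk : 1 ≤ k) :
    (repPairs 0 k n).ncard = (distinctSets n).ncard + (repPairs 1 k n).ncard := by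
  have hinj : Function.Injective (fun S : Finset ℕ => ((0 : ℕ), S)) := Prod.mk_right_injective 0
  have hunion : repPairs 0 k n = (fun S => (0, S)) '' distinctSets n ∪ repPairs 1 k n := by
    ext ⟨m, S⟩
    constructor
    · rintro ⟨_, hS, hsum⟩
      rcases Nat.eq_zero_or_pos m with rfl | hm
      · exact Or.inl ⟨S, ⟨hS, by simpa using hsum⟩, rfl⟩
      · exact Or.inr ⟨hm, hS, hsum⟩
    · rintro (⟨S', ⟨hS, hsum⟩, h⟩ | ⟨_, hS, hsum⟩)
      · simp only [Prod.mk.injEq] at h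
        obtain ⟨rfl, rfl⟩ := h
        exact ⟨le_rfl, hS, by simpa using hsum⟩
      · exact ⟨Nat.zero_le _, hS, hsum⟩
  have hfin : ((fun S => ((0 : ℕ), S)) '' distinctSets n).Finite :=
    (finite_repPairs 0 k n hk).subset (hunion ▸ Set.subset_union_left)
  rw [hunion, Set.ncard_union_eq ?_ hfin (finite_repPairs _ _ _ hk),
    Set.ncard_image_of_injective _ hinj]
  rw [Set.disjoint_left]
  rintro _ ⟨S, _, rfl⟩ ⟨h, _⟩
  simp at h

/-- In terms of the generating functions `A_k` of `s k` and `D` of `q`, this is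
`A_{k+1} + A_k = x^k (D + A_k)`. -/
lemma s_succ (k n : ℕ) (hk : 1 ≤ k) (hkn : k ≤ n) :
    s (k + 1) n + s k n = q (n - k) + s k (n - k) := by
  rw [s_eq_ncard _ _ hk, s_eq_ncard _ _ hk, s_eq_ncard _ _ (by omega), q_eq_ncard,
    ← ncard_weakPairs k n hk, ← ncard_repPairs_zero k _ hk, weakPairs_eq_image k n hkn]
  refine Set.ncard_image_of_injective _ ?_
  rintro ⟨m, S⟩ ⟨m', S'⟩ h
  simpa using h

theorem s3_eq (n : ℕ) (hn : 4 ≤ n) :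
    s 3 n + 2 * q (n - 1) = 2 * q (n - 3) + q n := by
  have h3 : s 3 n + s 2 n = q (n - 2) + s 2 (n - 2) := s_succ 2 n (by omega) (by omega)
  have h2 : s 2 n + s 1 n = q (n - 1) + s 1 (n - 1) := s_succ 1 n le_rfl (by omega)
  have h2' : s 2 (n - 2) + s 1 (n - 2) = q (n - 3) + s 1 (n - 3) :=
    s_succ 1 (n - 2) le_rfl (by omega)
  rw [s_one _ (by omega), s_one _ (by omega)] at h2 h2'
  omega
end

section
/- For every integer n ≥ 4, the number of partitions into distinct parts satisfies the lower bound 2·q(n-1) ≤ q(n) + 2·q(n-3); equivalently, 2q(n-1) − 2q(n-3) ≤ q(n). -/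
lemma q_eq_card_odds (n : ℕ) : q n = (Nat.Partition.odds n).card := by
  rw [Nat.Partition.card_odds_eq_card_distincts, q, Nat.card_eq_fintype_card,
    Fintype.card_subtype, Nat.Partition.distincts]

lemma mem_odds_iff {n : ℕ} (p : n.Partition) :
    p ∈ Nat.Partition.odds n ↔ ∀ i ∈ p.parts, ¬ Even i := by
  simp [Nat.Partition.odds, Nat.Partition.restricted]

lemma exists_mem_odds {n : ℕ} (T : Multiset ℕ) (hodd : ∀ i ∈ T, ¬ Even i) (hsum : T.sum = n) :
    ∃ p ∈ Nat.Partition.odds n, p.parts = T :=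
  ⟨⟨T, fun {i} hi => Nat.pos_of_ne_zero fun h => hodd i hi (by simp [h]), hsum⟩,
    (mem_odds_iff _).2 hodd, rfl⟩

/-- If every partition in `A` is related to some multiset of odd numbers with sum `n`, and the
relation determines its left argument, then `A` is no larger than the set of odd partitions
of `n`. -/
lemma card_le_odds {k n : ℕ} (A : Finset k.Partition) (r : Multiset ℕ → Multiset ℕ → Prop)
    (hr : ∀ S S' T, r S T → r S' T → S = S')
    (hA : ∀ p ∈ A, ∃ T, (∀ i ∈ T, ¬ Even i) ∧ T.sum = n ∧ r p.parts T) :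
    A.card ≤ (Nat.Partition.odds n).card := by
  refine Finset.card_le_card_of_forall_subsingleton (fun p p' => r p.parts p'.parts) ?_ ?_
  · intro p hp
    obtain ⟨T, h1, h2, h3⟩ := hA p hp
    obtain ⟨p', hp', rfl⟩ := exists_mem_odds T h1 h2
    exact ⟨p', hp', h3⟩
  · rintro b - p ⟨-, hp⟩ p' ⟨-, hp'⟩
    exact Nat.Partition.ext (hr _ _ _ hp hp')

lemma q_le_q_succ (n : ℕ) : q n ≤ q (n + 1) := by
  rw [q_eq_card_odds, q_eq_card_odds]
  refine card_le_odds _ (fun S T => T = 1 ::ₘ S) ?_ ?_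
  · rintro S S' T rfl h
    exact (Multiset.cons_inj_right 1).1 h
  · intro p hp
    rw [mem_odds_iff] at hp
    refine ⟨1 ::ₘ p.parts, ?_, ?_, rfl⟩
    · intro i hi
      rcases Multiset.mem_cons.1 hi with rfl | hi
      · decide
      · exact hp i hi
    · rw [Multiset.sum_cons, p.parts_sum, add_comm]

/-- The injection, as a relation, from odd partitions of `m + 2` with at most one part `1` to odd
partitions of `m`: here `t` is the smallest part other than `1`. -/
def ShrinkRel (S T : Multiset ℕ) : Prop :=
  ∃ (t : ℕ) (U : Multiset ℕ), 3 ≤ t ∧ (∀ u ∈ U, t ≤ u) ∧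
    ((S = t ::ₘ U ∧ T = (t - 2) ::ₘ U) ∨
      (S = 1 ::ₘ t ::ₘ U ∧ T = Multiset.replicate (t - 1) 1 + U))

lemma count_one_of_le {t : ℕ} {U : Multiset ℕ} (ht : 3 ≤ t) (hU : ∀ u ∈ U, t ≤ u) :
    U.count 1 = 0 :=
  Multiset.count_eq_zero.2 fun h => by have := hU 1 h; omega

lemma cons_ne_replicate {t t' : ℕ} {U U' : Multiset ℕ} (ht : 3 ≤ t) (hU : ∀ u ∈ U, t ≤ u)
    (ht' : 3 ≤ t') : (t - 2) ::ₘ U ≠ Multiset.replicate (t' - 1) 1 + U' := by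
  intro h
  have h1 := congrArg (Multiset.count 1) h
  rw [Multiset.count_cons, count_one_of_le ht hU, Multiset.count_add,
    Multiset.count_replicate_self] at h1
  split_ifs at h1 <;> omega

lemma ShrinkRel.left_unique (S S' T : Multiset ℕ) (h : ShrinkRel S T) (h' : ShrinkRel S' T) :
    S = S' := by
  obtain ⟨t, U, ht, hU, ⟨rfl, rfl⟩ | ⟨rfl, rfl⟩⟩ := h <;>
  obtain ⟨t', U', ht', hU', ⟨rfl, hT⟩ | ⟨rfl, hT⟩⟩ := h'
  · have htt : t = t' := by
      have ht2 : 2 ≤ t := by omega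
      -- Both `t - 2` and its counterpart are the minimum of the common image.
      have h1 : t - 2 ∈ (t' - 2) ::ₘ U' := hT ▸ Multiset.mem_cons_self _ _
      have h2 : t' - 2 ∈ (t - 2) ::ₘ U := hT ▸ Multiset.mem_cons_self _ _
      rcases Multiset.mem_cons.1 h1 with h1 | h1
      · omega
      rcases Multiset.mem_cons.1 h2 with h2 | h2
      · omega
      have := hU' _ h1
      have := hU _ h2
      omega
    subst htt
    rw [(Multiset.cons_inj_right _).1 hT]
  · exact absurd hT (cons_ne_replicate ht hU ht')
  · exact absurd hT.symm (cons_ne_replicate ht' hU' ht)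
  · have htt : t = t' := by
      have h1 := congrArg (Multiset.count 1) hT
      simp only [Multiset.count_add, Multiset.count_replicate_self, count_one_of_le ht hU,
        count_one_of_le ht' hU'] at h1
      omega
    subst htt
    rw [add_left_cancel hT]

/-- A nonempty multiset of odd numbers other than `1` splits off its smallest element. -/
lemma exists_min_cons {S : Multiset ℕ} (hS : S ≠ 0) (hodd : ∀ i ∈ S, ¬ Even i)
    (h1 : 1 ∉ S) : ∃ (t : ℕ) (U : Multiset ℕ), 3 ≤ t ∧ (∀ u ∈ U, t ≤ u) ∧ S = t ::ₘ U := by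
  obtain ⟨t, ht, hmin⟩ := S.toFinset.exists_min_image id
    (by simpa [Finset.nonempty_iff_ne_empty] using hS)
  rw [Multiset.mem_toFinset] at ht
  refine ⟨t, S.erase t, ?_, fun u hu => hmin u ?_, (Multiset.cons_erase ht).symm⟩
  · have hne : t ≠ 1 := fun h => h1 (h ▸ ht)
    have := Nat.not_even_iff.1 (hodd t ht)
    omega
  · exact Multiset.mem_toFinset.2 (Multiset.mem_of_mem_erase hu)

lemma exists_shrinkRel {m : ℕ} {S : Multiset ℕ} (hodd : ∀ i ∈ S, ¬ Even i)
    (hsum : S.sum = m + 2) (hc : S.count 1 < 2) :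
    ∃ T : Multiset ℕ, (∀ i ∈ T, ¬ Even i) ∧ T.sum = m ∧ ShrinkRel S T := by
  by_cases h1 : 1 ∈ S
  · obtain ⟨V, rfl⟩ := Multiset.exists_cons_of_mem h1
    rw [Multiset.count_cons_self] at hc
    rw [Multiset.sum_cons] at hsum
    obtain ⟨t, U, ht, hU, rfl⟩ := exists_min_cons (S := V) (by rintro rfl; simp at hsum)
      (fun i hi => hodd i (Multiset.mem_cons_of_mem hi))
      (Multiset.count_eq_zero.1 (by omega))
    rw [Multiset.sum_cons] at hsum
    refine ⟨Multiset.replicate (t - 1) 1 + U, ?_, ?_, t, U, ht, hU, Or.inr ⟨rfl, rfl⟩⟩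
    · intro i hi
      rcases Multiset.mem_add.1 hi with hi | hi
      · rw [Multiset.eq_of_mem_replicate hi]; decide
      · exact hodd i (by simp [hi])
    · rw [Multiset.sum_add, Multiset.sum_replicate, smul_eq_mul]
      omega
  · obtain ⟨t, U, ht, hU, rfl⟩ := exists_min_cons (by rintro rfl; simp at hsum) hodd h1
    rw [Multiset.sum_cons] at hsum
    refine ⟨(t - 2) ::ₘ U, ?_, ?_, t, U, ht, hU, Or.inl ⟨rfl, rfl⟩⟩
    · intro i hi
      rcases Multiset.mem_cons.1 hi with rfl | hi
      · have := Nat.not_even_iff.1 (hodd t (Multiset.mem_cons_self _ _))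
        rw [Nat.not_even_iff]
        omega
      · exact hodd i (Multiset.mem_cons_of_mem hi)
    · rw [Multiset.sum_cons]
      omega

lemma q_add_two_le (m : ℕ) : q (m + 2) ≤ 2 * q m := by
  rw [q_eq_card_odds, q_eq_card_odds, two_mul,
    ← Finset.card_filter_add_card_filter_not (s := Nat.Partition.odds (m + 2))
      (fun p => 2 ≤ p.parts.count 1)]
  refine add_le_add ?_ ?_
  · refine card_le_odds _ (fun S T => S = Multiset.replicate 2 1 + T) ?_ ?_
    · rintro S S' T rfl rfl
      rfl
    · intro p hp
      rw [Finset.mem_filter, mem_odds_iff] at hp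
      obtain ⟨T, hT⟩ := Multiset.le_iff_exists_add.1 (Multiset.le_count_iff_replicate_le.1 hp.2)
      refine ⟨T, fun i hi => hp.1 i (by rw [hT]; exact Multiset.mem_add.2 (Or.inr hi)), ?_, hT⟩
      have := p.parts_sum
      rw [hT, Multiset.sum_add, Multiset.sum_replicate, smul_eq_mul] at this
      omega
  · refine card_le_odds _ ShrinkRel ShrinkRel.left_unique ?_
    intro p hp
    rw [Finset.mem_filter, mem_odds_iff] at hp
    exact exists_shrinkRel hp.1 p.parts_sum (not_le.1 hp.2)

theorem q_lower (n : ℕ) (hn : 4 ≤ n) :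
    2 * q (n - 1) ≤ q n + 2 * q (n - 3) := by
  obtain ⟨k, rfl⟩ := Nat.exists_eq_add_of_le hn
  have h1 := q_le_q_succ (k + 3)
  have h2 := q_add_two_le (k + 1)
  have e1 : 4 + k - 1 = k + 3 := by omega
  have e2 : 4 + k - 3 = k + 1 := by omega
  rw [e1, e2, add_comm 4 k]
  have h1' : q (k + 3) ≤ q (k + 4) := h1
  have h2' : q (k + 3) ≤ 2 * q (k + 1) := h2
  omega
end

section
/- For every integer n ≥ 2, the number of partitions into distinct parts satisfies q(n) ≤ 2·q(n-1). -/
/-- `Lowers s b t` says that the multiset `t` arises from `s` by lowering its smallest element by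
one: for `b = true` this deletes an element `1`, and for `b = false` the element `m + 1` of `s` is
replaced by an `m` smaller than all the other elements. -/
def Lowers (s : Multiset ℕ) (b : Bool) (t : Multiset ℕ) : Prop :=
  if b then s = 1 ::ₘ t
  else ∃ m r, s = (m + 1) ::ₘ r ∧ t = m ::ₘ r ∧ ∀ a ∈ r, m < a

lemma exists_lowers (n : ℕ) (p : (n + 1).Partition) (hp : p.parts.Nodup) :
    ∃ x : Bool × {p' : n.Partition // p'.parts.Nodup}, Lowers p.parts x.1 x.2.1.parts := by
  have hsum := p.parts_sum
  by_cases h1 : 1 ∈ p.parts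
  · obtain ⟨t, ht⟩ := Multiset.exists_cons_of_mem h1
    rw [ht] at hp hsum
    rw [Multiset.sum_cons] at hsum
    have hpos : ∀ {i}, i ∈ t → 0 < i := fun {i} hi =>
      p.parts_pos (by rw [ht]; exact Multiset.mem_cons_of_mem hi)
    exact ⟨(true, ⟨⟨t, hpos, by omega⟩, (Multiset.nodup_cons.1 hp).2⟩), by simpa [Lowers] using ht⟩
  · have hex : ∃ k, k ∈ p.parts := by
      apply Multiset.exists_mem_of_ne_zero
      intro h0
      simp [h0] at hsum
    classical
    let k := Nat.find hex
    have hk : k ∈ p.parts := Nat.find_spec hex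
    have hmin : ∀ a ∈ p.parts, k ≤ a := fun a ha => Nat.find_min' hex ha
    have hk0 : 0 < k := p.parts_pos hk
    have hk1 : k ≠ 1 := fun h => h1 (by rwa [h] at hk)
    obtain ⟨m, hm⟩ : ∃ m, k = m + 1 := ⟨k - 1, by omega⟩
    rw [hm] at hk hmin
    obtain ⟨r, hr⟩ := Multiset.exists_cons_of_mem hk
    rw [hr] at hp hsum hmin
    rw [Multiset.sum_cons] at hsum
    have hlt : ∀ a ∈ r, m < a := fun a ha => hmin a (Multiset.mem_cons_of_mem ha)
    have hpos : ∀ {i}, i ∈ m ::ₘ r → 0 < i := by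
      intro i hi
      rcases Multiset.mem_cons.1 hi with rfl | hi
      · omega
      · exact (Nat.zero_le m).trans_lt (hlt i hi)
    exact ⟨(false, ⟨⟨m ::ₘ r, hpos, by rw [Multiset.sum_cons]; omega⟩,
      Multiset.nodup_cons.2 ⟨fun h => lt_irrefl m (hlt m h), (Multiset.nodup_cons.1 hp).2⟩⟩),
      by simpa [Lowers] using ⟨m, r, hr, rfl, hlt⟩⟩

lemma lowers_injective {s s' t : Multiset ℕ} {b : Bool} (h : Lowers s b t) (h' : Lowers s' b t) :
    s = s' := by
  cases b
  · simp only [Lowers, Bool.false_eq_true, if_false] at h h'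
    obtain ⟨m, r, rfl, rfl, hm⟩ := h
    obtain ⟨m', r', rfl, ht, hm'⟩ := h'
    -- Both `m` and `m'` are the smallest element of `t`.
    have hmm : m = m' := by
      have h1 : m ∈ m' ::ₘ r' := ht ▸ Multiset.mem_cons_self m r
      have h2 : m' ∈ m ::ₘ r := ht ▸ Multiset.mem_cons_self m' r'
      rcases Multiset.mem_cons.1 h1 with h1 | h1
      · exact h1
      rcases Multiset.mem_cons.1 h2 with h2 | h2
      · exact h2.symm
      have := hm _ h2
      have := hm' _ h1
      omega
    subst hmm
    rw [(Multiset.cons_inj_right m).1 ht]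
  · simp only [Lowers, if_true] at h h'
    rw [h, h']

theorem q_upper (n : ℕ) (hn : 2 ≤ n) :
    q n ≤ 2 * q (n - 1) := by
  obtain ⟨n, rfl⟩ : ∃ k, n = k + 1 := ⟨n - 1, by omega⟩
  rw [Nat.add_sub_cancel]
  choose f hf using fun p : {p : (n + 1).Partition // p.parts.Nodup} => exists_lowers n p.1 p.2
  have hinj : Function.Injective f := fun p p' h =>
    Subtype.ext (Nat.Partition.ext (lowers_injective (hf p) (h ▸ hf p')))
  have hcard := Nat.card_le_card_of_injective f hinj
  rwa [Nat.card_prod, Nat.card_eq_fintype_card (α := Bool), Fintype.card_bool] at hcard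
end

section
/- For every integer n ≥ 2, among the partitions of n whose smallest part occurs exactly once or exactly twice and all of whose other parts are distinct, the set of those whose smallest part is greater than 1 is in bijection with the partitions of n−1 into distinct parts; in particular its cardinality equals q(n-1). -/
/-- A nonempty distinct partition of `N` split into its smallest part `m` and the multiset `t` of its
remaining parts. -/
def MinData (N : ℕ) : Type :=
  {d : ℕ × Multiset ℕ // 0 < d.1 ∧ d.2.Nodup ∧ (∀ a ∈ d.2, d.1 < a) ∧ d.1 + d.2.sum = N}

/-- The smallest element of a multiset, and hence the rest of it, is determined by the multiset. -/
lemma cons_min_inj {c c' : ℕ} {t t' : Multiset ℕ} (h : c ::ₘ t = c' ::ₘ t')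
    (hc : ∀ a ∈ t, c ≤ a) (hc' : ∀ a ∈ t', c' ≤ a) : c = c' ∧ t = t' := by
  have e : c = c' := by
    have h1 : c ∈ c' ::ₘ t' := h ▸ Multiset.mem_cons_self c t
    have h2 : c' ∈ c ::ₘ t := h ▸ Multiset.mem_cons_self c' t'
    rw [Multiset.mem_cons] at h1 h2
    rcases h1 with h1 | h1
    · exact h1
    · rcases h2 with h2 | h2
      · exact h2.symm
      · exact le_antisymm (hc _ h2) (hc' _ h1)
  subst e
  exact ⟨rfl, (Multiset.cons_inj_right c).1 h⟩

/-- In `c ::ₘ t` with `t` duplicate-free and bounded below by `c`, the smallest part `c` occurs once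
or twice. -/
lemma isSmallestRep_of_parts_eq {n : ℕ} (p : n.Partition) {c : ℕ} {t : Multiset ℕ}
    (hp : p.parts = c ::ₘ t) (ht : t.Nodup) (hc : ∀ a ∈ t, c ≤ a) :
    IsSmallestRep 1 p ∨ IsSmallestRep 2 p := by
  have hmin : ∀ a ∈ p.parts, c ≤ a := by
    intro a ha
    rw [hp, Multiset.mem_cons] at ha
    rcases ha with rfl | ha
    · exact le_rfl
    · exact hc a ha
  have hother : ∀ a ∈ p.parts, a ≠ c → p.parts.count a = 1 := by
    intro a ha hac
    rw [hp, Multiset.mem_cons] at ha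
    rw [hp, Multiset.count_cons_of_ne hac]
    exact Multiset.count_eq_one_of_mem ht (ha.resolve_left hac)
  have hmem : c ∈ p.parts := by simp [hp]
  by_cases hct : c ∈ t
  · exact Or.inr ⟨c, hmem, hmin,
      by rw [hp, Multiset.count_cons_self, Multiset.count_eq_one_of_mem ht hct], hother⟩
  · exact Or.inl ⟨c, hmem, hmin,
      by rw [hp, Multiset.count_cons_self, Multiset.count_eq_zero_of_notMem hct], hother⟩

lemma parts_eq_of_isSmallestRep {n k : ℕ} {p : n.Partition} (hk : k ≤ 2)
    (h : IsSmallestRep k p) :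
    ∃ c t, p.parts = c ::ₘ t ∧ t.Nodup ∧ ∀ a ∈ t, c ≤ a := by
  obtain ⟨c, hmem, hmin, hcount, hother⟩ := h
  refine ⟨c, p.parts.erase c, (Multiset.cons_erase hmem).symm, ?_,
    fun a ha => hmin a (Multiset.mem_of_mem_erase ha)⟩
  rw [Multiset.nodup_iff_count_le_one]
  intro a
  by_cases hac : a = c
  · subst hac
    rw [Multiset.count_erase_self]
    omega
  · rw [Multiset.count_erase_of_ne hac]
    by_cases ha : a ∈ p.parts
    · exact (hother a ha hac).le
    · simp [Multiset.count_eq_zero_of_notMem ha]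

/-- The pair `(m, t)` viewed as the distinct partition `m ::ₘ t`. -/
def distinctData (N : ℕ) (d : MinData N) : {p : N.Partition // p.parts.Nodup} :=
  ⟨{ parts := d.1.1 ::ₘ d.1.2
     parts_pos := by
      obtain ⟨⟨m, t⟩, hm, ht, hlt, hs⟩ := d
      intro i hi
      rcases Multiset.mem_cons.1 hi with rfl | hi
      · exact hm
      · exact hm.trans (hlt i hi)
     parts_sum := by
      rw [Multiset.sum_cons]
      exact d.2.2.2.2 },
    Multiset.nodup_cons.2 ⟨fun h => lt_irrefl _ (d.2.2.2.1 _ h), d.2.2.1⟩⟩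

/-- The pair `(m, t)` viewed as the partition `(m + 1) ::ₘ t`, whose smallest part is allowed to
appear twice. -/
def repData (n : ℕ) (hn : 2 ≤ n) (d : MinData (n - 1)) :
    {p : n.Partition // (IsSmallestRep 1 p ∨ IsSmallestRep 2 p) ∧ ∀ a ∈ p.parts, 1 < a} :=
  ⟨{ parts := (d.1.1 + 1) ::ₘ d.1.2
     parts_pos := by
      obtain ⟨⟨m, t⟩, hm, ht, hlt, hs⟩ := d
      intro i hi
      rcases Multiset.mem_cons.1 hi with rfl | hi
      · exact Nat.succ_pos m
      · exact hm.trans (hlt i hi)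
     parts_sum := by
      have := d.2.2.2.2
      rw [Multiset.sum_cons]
      omega },
    isSmallestRep_of_parts_eq _ rfl d.2.2.1 (fun a ha => d.2.2.2.1 a ha), by
      obtain ⟨⟨m, t⟩, hm, ht, hlt, hs⟩ := d
      intro i hi
      rcases Multiset.mem_cons.1 hi with rfl | hi
      · exact Nat.succ_lt_succ hm
      · exact lt_of_le_of_lt hm (hlt i hi)⟩

lemma distinctData_bijective {N : ℕ} (hN : 0 < N) : Function.Bijective (distinctData N) := by
  constructor
  · intro d d' h
    have h' : d.1.1 ::ₘ d.1.2 = d'.1.1 ::ₘ d'.1.2 :=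
      congrArg (fun p : {p : N.Partition // p.parts.Nodup} => p.1.parts) h
    obtain ⟨h1, h2⟩ := cons_min_inj h' (fun a ha => (d.2.2.2.1 a ha).le)
      (fun a ha => (d'.2.2.2.1 a ha).le)
    exact Subtype.ext (Prod.ext h1 h2)
  · rintro ⟨p, hp⟩
    have hne : p.parts.toFinset.Nonempty := by
      rw [Multiset.toFinset_nonempty]
      intro h0
      have := p.parts_sum
      rw [h0, Multiset.sum_zero] at this
      omega
    obtain ⟨m, hm, hmin⟩ := p.parts.toFinset.exists_min_image id hne
    simp only [Multiset.mem_toFinset, id] at hm hmin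
    have hcons : m ::ₘ p.parts.erase m = p.parts := Multiset.cons_erase hm
    have hsum : m + (p.parts.erase m).sum = N := by
      rw [← Multiset.sum_cons, hcons, p.parts_sum]
    refine ⟨⟨(m, p.parts.erase m), p.parts_pos hm, hp.erase m, ?_, hsum⟩,
      Subtype.ext (Nat.Partition.ext hcons)⟩
    intro a ha
    rw [hp.mem_erase_iff] at ha
    exact lt_of_le_of_ne (hmin a ha.2) (Ne.symm ha.1)

lemma repData_bijective {n : ℕ} (hn : 2 ≤ n) : Function.Bijective (repData n hn) := by
  constructor
  · intro d d' h
    have h' : (d.1.1 + 1) ::ₘ d.1.2 = (d'.1.1 + 1) ::ₘ d'.1.2 :=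
      congrArg (fun p : {p : n.Partition //
        (IsSmallestRep 1 p ∨ IsSmallestRep 2 p) ∧ ∀ a ∈ p.parts, 1 < a} => p.1.parts) h
    obtain ⟨h1, h2⟩ := cons_min_inj h' d.2.2.2.1 d'.2.2.2.1
    exact Subtype.ext (Prod.ext (Nat.succ_injective h1) h2)
  · rintro ⟨p, hp, hgt⟩
    obtain ⟨c, t, hparts, ht, hmin⟩ : ∃ c t, p.parts = c ::ₘ t ∧ t.Nodup ∧ ∀ a ∈ t, c ≤ a :=
      hp.elim (parts_eq_of_isSmallestRep one_le_two) (parts_eq_of_isSmallestRep le_rfl)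
    have hc : 1 < c := hgt c (by simp [hparts])
    have hsum : c + t.sum = n := by rw [← Multiset.sum_cons, ← hparts, p.parts_sum]
    obtain ⟨m, rfl⟩ : ∃ m, c = m + 1 := ⟨c - 1, by omega⟩
    have hsum' : m + t.sum = n - 1 := by omega
    exact ⟨⟨(m, t), Nat.lt_of_succ_lt_succ hc, ht, hmin, hsum'⟩,
      Subtype.ext (Nat.Partition.ext hparts.symm)⟩

theorem smallest_gt_one_bijection (n : ℕ) (hn : 2 ≤ n) :
    Nonempty
      ({p : n.Partition //
          (IsSmallestRep 1 p ∨ IsSmallestRep 2 p) ∧ ∀ a ∈ p.parts, 1 < a} ≃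
        {p : (n - 1).Partition // p.parts.Nodup}) ∧
    Nat.card {p : n.Partition //
        (IsSmallestRep 1 p ∨ IsSmallestRep 2 p) ∧ ∀ a ∈ p.parts, 1 < a} =
      q (n - 1) := by
  have e := (Equiv.ofBijective _ (repData_bijective hn)).symm.trans
    (Equiv.ofBijective _ (distinctData_bijective (N := n - 1) (by omega)))
  exact ⟨⟨e⟩, Nat.card_congr e⟩
end

section
/- For every integer n ≥ 2, among the partitions of n whose smallest part occurs exactly once or exactly twice and all of whose other parts are distinct, the partitions whose smallest part equals 1 are equinumerous with the partitions whose smallest part is greater than 1. -/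
theorem isSmallestRep_iff {n : ℕ} (p : n.Partition) :
    (IsSmallestRep 1 p ∨ IsSmallestRep 2 p) ↔
      ∃ m t, p.parts = m ::ₘ t ∧ t.Nodup ∧ ∀ a ∈ t, m ≤ a := by
  constructor
  · intro h
    obtain ⟨m, hm, hle, hc, hd⟩ : ∃ m ∈ p.parts, (∀ a ∈ p.parts, m ≤ a) ∧
        p.parts.count m ≤ 2 ∧ ∀ a ∈ p.parts, a ≠ m → p.parts.count a = 1 := by
      rcases h with ⟨m, hm, hle, hc, hd⟩ | ⟨m, hm, hle, hc, hd⟩ <;>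
        exact ⟨m, hm, hle, by omega, hd⟩
    refine ⟨m, p.parts.erase m, (Multiset.cons_erase hm).symm, ?_,
      fun a ha => hle a (Multiset.mem_of_mem_erase ha)⟩
    rw [Multiset.nodup_iff_count_le_one]
    intro a
    by_cases ham : a = m
    · subst ham
      rw [Multiset.count_erase_self]
      omega
    · rw [Multiset.count_erase_of_ne ham]
      by_cases ha : a ∈ p.parts
      · exact (hd a ha ham).le
      · simp [Multiset.count_eq_zero_of_notMem ha]
  · rintro ⟨m, t, hp, ht, hle⟩
    have hd : ∀ a ∈ p.parts, a ≠ m → p.parts.count a = 1 := by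
      intro a ha ham
      rw [hp] at ha ⊢
      rw [Multiset.count_cons_of_ne ham]
      exact Multiset.count_eq_one_of_mem ht ((Multiset.mem_cons.1 ha).resolve_left ham)
    have hmem : m ∈ p.parts := by simp [hp]
    have hmin : ∀ a ∈ p.parts, m ≤ a := by
      intro a ha
      rw [hp, Multiset.mem_cons] at ha
      rcases ha with rfl | ha
      exacts [le_rfl, hle a ha]
    by_cases hmt : m ∈ t
    · refine Or.inr ⟨m, hmem, hmin, ?_, hd⟩
      rw [hp, Multiset.count_cons_self, Multiset.count_eq_one_of_mem ht hmt]
    · refine Or.inl ⟨m, hmem, hmin, ?_, hd⟩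
      rw [hp, Multiset.count_cons_self, Multiset.count_eq_zero_of_notMem hmt]

/-- Partitions of `n - 1` into distinct parts with at least one part, encoded as pairs `(m, t)`
of the smallest part `m` and the multiset `t` of the other parts. -/
abbrev Core (n : ℕ) : Type :=
  {x : ℕ × Multiset ℕ // 1 ≤ x.1 ∧ x.2.Nodup ∧ (∀ a ∈ x.2, x.1 < a) ∧ 1 + x.1 + x.2.sum = n}

/-- A lower bound split off from a multiset is determined by the multiset, being its minimum. -/
theorem cons_min_inj_s7 {m m' : ℕ} {t t' : Multiset ℕ} (h : m ::ₘ t = m' ::ₘ t')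
    (ht : ∀ a ∈ t, m ≤ a) (ht' : ∀ a ∈ t', m' ≤ a) : m = m' ∧ t = t' := by
  have h1 : m ∈ m' ::ₘ t' := h ▸ Multiset.mem_cons_self m t
  have h2 : m' ∈ m ::ₘ t := h ▸ Multiset.mem_cons_self m' t'
  have hm : m = m' := by
    rcases Multiset.mem_cons.1 h1 with h1 | h1
    · exact h1
    rcases Multiset.mem_cons.1 h2 with h2 | h2
    · exact h2.symm
    exact le_antisymm (ht _ h2) (ht' _ h1)
  subst hm
  exact ⟨rfl, (Multiset.cons_inj_right m).1 h⟩

/-- Adjoining a part `1` to the distinct partition `m ::ₘ t`. -/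
def Core.withOne {n : ℕ} (x : Core n) :
    {p : n.Partition // (IsSmallestRep 1 p ∨ IsSmallestRep 2 p) ∧ 1 ∈ p.parts} :=
  ⟨{ parts := 1 ::ₘ x.1.1 ::ₘ x.1.2
     parts_pos := by
      obtain ⟨⟨m, t⟩, h1, hn, hlt, hs⟩ := x
      intro i hi
      simp only [Multiset.mem_cons] at hi h1 hlt
      rcases hi with rfl | rfl | hi
      · omega
      · omega
      · have := hlt i hi
        omega
     parts_sum := by
      obtain ⟨⟨m, t⟩, h1, hn, hlt, hs⟩ := x
      simp only [Multiset.sum_cons] at hs ⊢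
      omega }, by
    obtain ⟨⟨m, t⟩, h1, hn, hlt, hs⟩ := x
    refine ⟨(isSmallestRep_iff _).2 ⟨1, m ::ₘ t, rfl, ?_, ?_⟩, by simp⟩
    · exact Multiset.nodup_cons.2 ⟨fun h => lt_irrefl _ (hlt m h), hn⟩
    · intro a ha
      simp only [Multiset.mem_cons] at ha h1 hlt
      rcases ha with rfl | ha
      · exact h1
      · have := hlt a ha
        omega⟩

/-- Increasing the smallest part of the distinct partition `m ::ₘ t` by one. -/
def Core.bump {n : ℕ} (x : Core n) :
    {p : n.Partition // (IsSmallestRep 1 p ∨ IsSmallestRep 2 p) ∧ ∀ a ∈ p.parts, 1 < a} :=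
  have hgt : ∀ a ∈ (x.1.1 + 1) ::ₘ x.1.2, 1 < a := by
    obtain ⟨⟨m, t⟩, h1, hn, hlt, hs⟩ := x
    intro i hi
    simp only [Multiset.mem_cons] at hi h1 hlt
    rcases hi with rfl | hi
    · omega
    · have := hlt i hi
      omega
  ⟨{ parts := (x.1.1 + 1) ::ₘ x.1.2
     parts_pos := fun hi => Nat.zero_lt_of_lt (hgt _ hi)
     parts_sum := by
      obtain ⟨⟨m, t⟩, h1, hn, hlt, hs⟩ := x
      simp only [Multiset.sum_cons] at hs ⊢
      omega },
    (isSmallestRep_iff _).2 ⟨x.1.1 + 1, x.1.2, rfl, x.2.2.1, x.2.2.2.1⟩, hgt⟩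

theorem Core.withOne_bijective {n : ℕ} (hn : 2 ≤ n) :
    Function.Bijective (Core.withOne (n := n)) := by
  constructor
  · rintro ⟨⟨m, t⟩, h1, hnd, hlt, hs⟩ ⟨⟨m', t'⟩, h1', hnd', hlt', hs'⟩ h
    have h2 : 1 ::ₘ m ::ₘ t = 1 ::ₘ m' ::ₘ t' := congrArg (fun y => y.1.parts) h
    obtain ⟨rfl, rfl⟩ := cons_min_inj_s7 ((Multiset.cons_inj_right 1).1 h2)
      (fun a ha => (hlt a ha).le) (fun a ha => (hlt' a ha).le)
    rfl
  · rintro ⟨p, hp, h1⟩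
    obtain ⟨k, u, hpu, hnd, hle⟩ := (isSmallestRep_iff p).1 hp
    have hsum := p.parts_sum
    -- The split-off part is a positive lower bound of a multiset containing `1`.
    obtain rfl : k = 1 := by
      have hk : 0 < k := p.parts_pos (by simp [hpu])
      rw [hpu, Multiset.mem_cons] at h1
      rcases h1 with h1 | h1
      · exact h1.symm
      · have := hle 1 h1
        omega
    rw [hpu, Multiset.sum_cons] at hsum
    have hne : u.toFinset.Nonempty := by
      rw [Multiset.toFinset_nonempty]
      rintro rfl
      simp at hsum
      omega
    obtain ⟨m, hm, hmin⟩ := u.toFinset.exists_min_image id hne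
    simp only [Multiset.mem_toFinset, id] at hm hmin
    obtain ⟨t, rfl⟩ := Multiset.exists_cons_of_mem hm
    obtain ⟨hmt, hnt⟩ := Multiset.nodup_cons.1 hnd
    rw [Multiset.sum_cons] at hsum
    refine ⟨⟨(m, t), hle m hm, hnt, fun a ha => ?_, ?_⟩, ?_⟩
    · exact lt_of_le_of_ne (hmin a (Multiset.mem_cons_of_mem ha)) (fun h : m = a => hmt (h ▸ ha))
    · change 1 + m + t.sum = n
      omega
    · exact Subtype.ext (Nat.Partition.ext hpu.symm)

theorem Core.bump_bijective {n : ℕ} :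
    Function.Bijective (Core.bump (n := n)) := by
  constructor
  · rintro ⟨⟨m, t⟩, h1, hnd, hlt, hs⟩ ⟨⟨m', t'⟩, h1', hnd', hlt', hs'⟩ h
    have h2 : (m + 1) ::ₘ t = (m' + 1) ::ₘ t' := congrArg (fun y => y.1.parts) h
    obtain ⟨hm, rfl⟩ := cons_min_inj_s7 h2 hlt hlt'
    obtain rfl : m = m' := by omega
    rfl
  · rintro ⟨p, hp, hgt⟩
    obtain ⟨k, t, hpt, hnd, hle⟩ := (isSmallestRep_iff p).1 hp
    have hsum := p.parts_sum
    have hk : 1 < k := hgt k (by simp [hpt])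
    obtain ⟨m, rfl⟩ : ∃ m, k = m + 1 := ⟨k - 1, by omega⟩
    rw [hpt, Multiset.sum_cons] at hsum
    refine ⟨⟨(m, t), Nat.le_of_lt_succ hk, hnd, hle, ?_⟩, ?_⟩
    · change 1 + m + t.sum = n
      omega
    · exact Subtype.ext (Nat.Partition.ext hpt.symm)

theorem smallest_one_equinumerous (n : ℕ) (hn : 2 ≤ n) :
    Nat.card {p : n.Partition // (IsSmallestRep 1 p ∨ IsSmallestRep 2 p) ∧ 1 ∈ p.parts} =
      Nat.card {p : n.Partition //
        (IsSmallestRep 1 p ∨ IsSmallestRep 2 p) ∧ ∀ a ∈ p.parts, 1 < a} :=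
  (Nat.card_eq_of_bijective _ (Core.withOne_bijective hn)).symm.trans
    (Nat.card_eq_of_bijective _ Core.bump_bijective)
end

section
/- For every integer n ≥ 7, the number of partitions into distinct parts satisfies q(n) + 2·q(n-4) ≤ 2·q(n-1) + 2·q(n-6); equivalently, q(n) ≤ 2q(n-1) − 2q(n-4) + 2q(n-6). -/
open Finset Nat.Partition

/-- The number of partitions of `n` all of whose parts are odd and at least `k`. -/
def oddFrom (k n : ℕ) : ℕ := #(restricted n fun i ↦ Odd i ∧ k ≤ i)

/-- Euler's theorem on partitions into odd and into distinct parts. -/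
lemma q_eq_oddFrom_one (n : ℕ) : q n = oddFrom 1 n := by
  have h : q n = #(distincts n) := by
    rw [q, Nat.card_eq_fintype_card, Fintype.card_subtype, distincts]
  rw [h, ← card_odds_eq_card_distincts, oddFrom, odds]
  congr 1
  ext p
  simp only [restricted, mem_filter, Finset.mem_univ, true_and, Nat.not_even_iff_odd]
  exact forall₂_congr fun i hi ↦ ⟨fun h ↦ ⟨h, p.parts_pos hi⟩, fun h ↦ h.1⟩

/-- Adjoining the part `k` to a partition. -/
def addPart {k : ℕ} (hk : 0 < k) {n : ℕ} (p : n.Partition) : (n + k).Partition where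
  parts := k ::ₘ p.parts
  parts_pos := by
    intro i hi
    rcases Multiset.mem_cons.1 hi with rfl | hi
    · exact hk
    · exact p.parts_pos hi
  parts_sum := by rw [Multiset.sum_cons, p.parts_sum, add_comm]

lemma addPart_injective {k : ℕ} (hk : 0 < k) (n : ℕ) :
    Function.Injective (addPart hk (n := n)) := by
  intro p p' h
  have h' := congrArg Nat.Partition.parts h
  exact Nat.Partition.ext ((Multiset.cons_inj_right k).1 h')

/-- Partitions of `n + k` into odd parts `≥ k` either contain `k`, and then come from a partition
of `n`, or have all their parts `≥ k + 2`. -/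
lemma oddFrom_add {k : ℕ} (hk : Odd k) (n : ℕ) :
    oddFrom k (n + k) = oddFrom k n + oddFrom (k + 2) (n + k) := by
  have hpos := hk.pos
  rw [oddFrom, ← card_filter_add_card_filter_not (fun p : (n + k).Partition ↦ k ∈ p.parts)]
  congr 1
  · rw [oddFrom, ← card_image_of_injective _ (addPart_injective hpos n)]
    congr 1
    ext p
    simp only [restricted, mem_filter, Finset.mem_univ, true_and, mem_image]
    constructor
    · rintro ⟨hp, hkp⟩
      obtain ⟨t, ht⟩ := Multiset.exists_cons_of_mem hkp
      have hsum := p.parts_sum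
      rw [ht, Multiset.sum_cons] at hsum
      have hsub : ∀ i ∈ t, i ∈ p.parts := fun i hi ↦ ht ▸ Multiset.mem_cons_of_mem hi
      refine ⟨⟨t, fun {i} hi ↦ p.parts_pos (hsub i hi), by omega⟩, fun i hi ↦ hp i (hsub i hi), ?_⟩
      exact Nat.Partition.ext ht.symm
    · rintro ⟨r, hr, rfl⟩
      refine ⟨fun i hi ↦ ?_, Multiset.mem_cons_self _ _⟩
      rcases Multiset.mem_cons.1 hi with rfl | hi
      · exact ⟨hk, le_rfl⟩
      · exact hr i hi
  · rw [oddFrom]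
    congr 1
    ext p
    simp only [restricted, mem_filter, Finset.mem_univ, true_and]
    constructor
    · rintro ⟨hp, hkp⟩ i hi
      obtain ⟨ho, hle⟩ := hp i hi
      have hne : i ≠ k := fun h ↦ hkp (h ▸ hi)
      exact ⟨ho, by grind⟩
    · intro hp
      exact ⟨fun i hi ↦ ⟨(hp i hi).1, by have := (hp i hi).2; omega⟩,
        fun h ↦ by have := (hp k h).2; omega⟩

open Classical in
/-- Lower the sum of a multiset of odd numbers `≥ 5` by `6`: trade an element `m ≥ 7` (any choice
will do) for `m - 6` ones or, if there is no such `m`, two fives for four ones. -/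
noncomputable def shrink (t : Multiset ℕ) : Multiset ℕ :=
  if h : ∃ m ∈ t, 7 ≤ m then t.erase h.choose + Multiset.replicate (h.choose - 6) 1
  else (t.erase 5).erase 5 + Multiset.replicate 4 1

/-- The two cases of `shrink`; `u` collects the elements that are kept. -/
lemma shrink_spec {t : Multiset ℕ} (ht : ∀ i ∈ t, Odd i ∧ 5 ≤ i) (hsum : 7 ≤ t.sum) :
    (∃ m u, Odd m ∧ 7 ≤ m ∧ t = m ::ₘ u ∧ shrink t = u + Multiset.replicate (m - 6) 1) ∨
    ∃ u, t = 5 ::ₘ 5 ::ₘ u ∧ shrink t = u + Multiset.replicate 4 1 := by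
  by_cases h : ∃ m ∈ t, 7 ≤ m
  · obtain ⟨hm, h7⟩ := h.choose_spec
    refine Or.inl ⟨h.choose, t.erase h.choose, (ht _ hm).1, h7, (Multiset.cons_erase hm).symm, ?_⟩
    rw [shrink, dif_pos h]
  · right
    have h5 : ∀ i ∈ t, i = 5 := by
      intro i hi
      obtain ⟨ho, hle⟩ := ht i hi
      have : ¬ 7 ≤ i := fun h7 ↦ h ⟨i, hi, h7⟩
      grind
    obtain ⟨c, rfl⟩ : ∃ c, t = Multiset.replicate c 5 := ⟨_, Multiset.eq_replicate_card.2 h5⟩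
    have hc : 2 ≤ c := by
      rw [Multiset.sum_replicate, smul_eq_mul] at hsum
      omega
    obtain ⟨c, rfl⟩ := Nat.exists_eq_add_of_le' hc
    refine ⟨Multiset.replicate c 5, by simp [Multiset.replicate_succ], ?_⟩
    rw [shrink, dif_neg h]
    simp [Multiset.replicate_succ]

lemma shrink_sum {t : Multiset ℕ} (ht : ∀ i ∈ t, Odd i ∧ 5 ≤ i) (hsum : 7 ≤ t.sum) :
    (shrink t).sum = t.sum - 6 := by
  rcases shrink_spec ht hsum with ⟨m, u, -, h7, h1, h2⟩ | ⟨u, h1, h2⟩ <;> rw [h2, h1] <;>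
    simp only [Multiset.sum_add, Multiset.sum_replicate, Multiset.sum_cons, smul_eq_mul] <;> omega

lemma shrink_odd {t : Multiset ℕ} (ht : ∀ i ∈ t, Odd i ∧ 5 ≤ i) (hsum : 7 ≤ t.sum) :
    ∀ i ∈ shrink t, Odd i ∧ 1 ≤ i := by
  intro i hi
  have key : i ∈ t ∨ i = 1 := by
    rcases shrink_spec ht hsum with ⟨m, u, -, h7, h1, h2⟩ | ⟨u, h1, h2⟩ <;> rw [h2] at hi <;>
      rw [h1] <;> rcases Multiset.mem_add.1 hi with hi | hi
    · exact Or.inl (by simp [hi])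
    · exact Or.inr (Multiset.eq_of_mem_replicate hi)
    · exact Or.inl (by simp [hi])
    · exact Or.inr (Multiset.eq_of_mem_replicate hi)
  rcases key with h | rfl
  · exact ⟨(ht i h).1, by have := (ht i h).2; omega⟩
  · exact ⟨odd_one, le_rfl⟩

/-- The number of ones separates a multiset without ones from ones added to it. -/
lemma add_ones_inj {u v : Multiset ℕ} (hu : 1 ∉ u) (hv : 1 ∉ v) {a b : ℕ}
    (h : u + Multiset.replicate a 1 = v + Multiset.replicate b 1) : u = v ∧ a = b := by
  have hab : a = b := by
    have := congrArg (Multiset.count 1) h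
    simpa [Multiset.count_eq_zero_of_notMem hu, Multiset.count_eq_zero_of_notMem hv] using this
  subst hab
  exact ⟨add_right_cancel h, rfl⟩

lemma shrink_inj {t t' : Multiset ℕ} (ht : ∀ i ∈ t, Odd i ∧ 5 ≤ i) (hsum : 7 ≤ t.sum)
    (ht' : ∀ i ∈ t', Odd i ∧ 5 ≤ i) (hsum' : 7 ≤ t'.sum) (h : shrink t = shrink t') : t = t' := by
  have h1 : 1 ∉ t := fun h ↦ by have := (ht 1 h).2; omega
  have h1' : 1 ∉ t' := fun h ↦ by have := (ht' 1 h).2; omega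
  rcases shrink_spec ht hsum with ⟨m, u, ho, h7, e, es⟩ | ⟨u, e, es⟩ <;>
  rcases shrink_spec ht' hsum' with ⟨m', u', ho', h7', e', es'⟩ | ⟨u', e', es'⟩ <;>
  rw [es, es'] at h <;>
  obtain ⟨hu, hm⟩ := add_ones_inj (fun hx ↦ h1 (by rw [e]; simp [hx]))
    (fun hx ↦ h1' (by rw [e']; simp [hx])) h
  · obtain rfl : m = m' := by omega
    rw [e, e', hu]
  -- In the two mixed cases an odd number `m - 6` would equal `4`.
  · grind
  · grind
  · rw [e, e', hu]

lemma oddFrom_five_le {n : ℕ} (hn : 7 ≤ n) : oddFrom 5 n ≤ oddFrom 1 (n - 6) := by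
  have hmem : ∀ p ∈ restricted n (fun i ↦ Odd i ∧ 5 ≤ i), ∀ i ∈ p.parts, Odd i ∧ 5 ≤ i := by
    intro p hp
    simpa [restricted] using hp
  have hsum : ∀ p : n.Partition, 7 ≤ p.parts.sum := fun p ↦ by rw [p.parts_sum]; exact hn
  have hinj : ∀ k : ℕ, Function.Injective (Nat.Partition.parts (n := k)) :=
    fun k p p' h ↦ Nat.Partition.ext h
  rw [oddFrom, oddFrom, ← card_image_of_injective (restricted (n - 6) _) (hinj _)]
  refine card_le_card_of_injOn (fun p ↦ shrink p.parts) (fun p hp ↦ ?_) fun p hp p' hp' h ↦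
    hinj n (shrink_inj (hmem p hp) (hsum p) (hmem p' hp') (hsum p') h)
  have hodd := shrink_odd (hmem p hp) (hsum p)
  refine mem_coe.2 (mem_image.2 ⟨⟨shrink p.parts, fun {i} hi ↦ (hodd i hi).2, ?_⟩, ?_, rfl⟩)
  · rw [shrink_sum (hmem p hp) (hsum p), p.parts_sum]
  · simpa [restricted] using hodd

theorem q_upper' (n : ℕ) (hn : 7 ≤ n) :
    q n + 2 * q (n - 4) ≤ 2 * q (n - 1) + 2 * q (n - 6) := by
  obtain ⟨k, rfl⟩ := Nat.exists_eq_add_of_le' (show 6 ≤ n by omega)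
  have he := oddFrom_five_le hn
  have h1 := oddFrom_add (k := 1) odd_one
  have h3 := oddFrom_add (k := 3) (by decide)
  have a0 := h1 k
  have a1 := h1 (k + 1)
  have a2 := h1 (k + 2)
  have a3 := h1 (k + 3)
  have a4 := h1 (k + 4)
  have a5 := h1 (k + 5)
  have b1 := h3 (k + 1)
  have b2 := h3 (k + 2)
  have b3 := h3 (k + 3)
  simp only [q_eq_oddFrom_one, Nat.add_sub_cancel, Nat.add_assoc, Nat.reduceAdd,
    show k + 6 - 4 = k + 2 by omega, show k + 6 - 1 = k + 5 by omega] at *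
  omega
end

section
/- For all integers k ≥ 2 and n ≥ 1, the counts ℓ_k satisfy ℓ_k(n) + ℓ_{k-1}(n) = ℓ_{k-1}(n+k-1); equivalently, ℓ_k(n) = −ℓ_{k-1}(n) + ℓ_{k-1}(n+k-1). -/
/-- Pairs `(m, S)` encoding the partitions of `n` whose parts are `k` copies of the largest part `m`
together with the elements of `S`, each once. -/
def largestPairs (k n : ℕ) : Set (ℕ × Finset ℕ) :=
  {x | 0 < x.1 ∧ (∀ a ∈ x.2, 0 < a ∧ a < x.1) ∧ k * x.1 + ∑ a ∈ x.2, a = n}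

/-- The partition encoded by a pair `(m, S)`. -/
def pairToPartition (k n : ℕ) (x : largestPairs k n) : n.Partition where
  parts := Multiset.replicate k x.1.1 + x.1.2.val
  parts_pos := by
    obtain ⟨⟨m, S⟩, hm, hS, hsum⟩ := x
    intro i hi
    rcases Multiset.mem_add.1 hi with h | h
    · rw [Multiset.eq_of_mem_replicate h]; exact hm
    · exact (hS i h).1
  parts_sum := by
    obtain ⟨⟨m, S⟩, hm, hS, hsum⟩ := x
    rw [Multiset.sum_add, Multiset.sum_replicate, smul_eq_mul]
    rw [Finset.sum, Multiset.map_id'] at hsum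
    exact hsum

lemma isLargestRep_pairToPartition {k n : ℕ} (hk : 0 < k) (x : largestPairs k n) :
    IsLargestRep k (pairToPartition k n x) := by
  obtain ⟨⟨m, S⟩, hm, hS, hsum⟩ := x
  have hmS : m ∉ S := fun h => lt_irrefl _ (hS m h).2
  refine ⟨m, ?_, ?_, ?_, ?_⟩
  · exact Multiset.mem_add.2 (Or.inl (Multiset.mem_replicate.2 ⟨hk.ne', rfl⟩))
  · intro a ha
    rcases Multiset.mem_add.1 ha with h | h
    · exact (Multiset.eq_of_mem_replicate h).le
    · exact (hS a h).2.le
  · simp [pairToPartition, Multiset.count_eq_zero_of_notMem (s := S.val) hmS]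
  · intro a ha ham
    rcases Multiset.mem_add.1 ha with h | h
    · exact absurd (Multiset.eq_of_mem_replicate h) ham
    · simp [pairToPartition, Multiset.count_replicate, Ne.symm ham,
        Multiset.count_eq_one_of_mem S.nodup h]

lemma pairToPartition_bijective {k n : ℕ} (hk : 0 < k) :
    Function.Bijective (fun x : largestPairs k n =>
      (⟨pairToPartition k n x, isLargestRep_pairToPartition hk x⟩ :
        {p : n.Partition // IsLargestRep k p})) := by
  constructor
  · rintro ⟨⟨m, S⟩, hm, hS, hsum⟩ ⟨⟨m', S'⟩, hm', hS', hsum'⟩ h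
    have h1 : Multiset.replicate k m + S.val = Multiset.replicate k m' + S'.val :=
      congrArg (fun p => p.1.parts) h
    have hle : m ≤ m' := by
      have : m ∈ Multiset.replicate k m' + S'.val :=
        h1 ▸ Multiset.mem_add.2 (Or.inl (Multiset.mem_replicate.2 ⟨hk.ne', rfl⟩))
      rcases Multiset.mem_add.1 this with h | h
      · exact (Multiset.eq_of_mem_replicate h).le
      · exact (hS' m h).2.le
    have hge : m' ≤ m := by
      have : m' ∈ Multiset.replicate k m + S.val :=
        h1 ▸ Multiset.mem_add.2 (Or.inl (Multiset.mem_replicate.2 ⟨hk.ne', rfl⟩))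
      rcases Multiset.mem_add.1 this with h | h
      · exact (Multiset.eq_of_mem_replicate h).le
      · exact (hS m' h).2.le
    obtain rfl := le_antisymm hle hge
    have h2 := Finset.val_injective (add_left_cancel h1)
    subst h2
    rfl
  · rintro ⟨p, m, hm, hmax, hcount, hone⟩
    have hparts : Multiset.replicate k m + (p.parts.toFinset.erase m).val = p.parts := by
      ext a
      rw [Multiset.count_add, Multiset.count_replicate]
      by_cases ham : a = m
      · subst ham
        have : a ∉ (p.parts.toFinset.erase a).val := Finset.notMem_erase a _
        rw [Multiset.count_eq_zero_of_notMem this, if_pos rfl, hcount, add_zero]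
      · rw [if_neg (Ne.symm ham), zero_add]
        by_cases hap : a ∈ p.parts
        · have : a ∈ (p.parts.toFinset.erase m).val :=
            Finset.mem_erase.2 ⟨ham, Multiset.mem_toFinset.2 hap⟩
          rw [hone a hap ham, Multiset.count_eq_one_of_mem (Finset.nodup _) this]
        · have : a ∉ (p.parts.toFinset.erase m).val := fun h =>
            hap (Multiset.mem_toFinset.1 (Finset.mem_of_mem_erase h))
          rw [Multiset.count_eq_zero_of_notMem this, Multiset.count_eq_zero_of_notMem hap]
    refine ⟨⟨⟨m, p.parts.toFinset.erase m⟩, p.parts_pos hm, ?_, ?_⟩, ?_⟩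
    · intro a ha
      obtain ⟨ham, hap⟩ := Finset.mem_erase.1 ha
      have hap := Multiset.mem_toFinset.1 hap
      exact ⟨p.parts_pos hap, lt_of_le_of_ne (hmax a hap) ham⟩
    · have h := congrArg Multiset.sum hparts
      rw [p.parts_sum, Multiset.sum_add, Multiset.sum_replicate, smul_eq_mul] at h
      rw [Finset.sum, Multiset.map_id']
      exact h
    · exact Subtype.ext (Nat.Partition.ext hparts)

lemma card_largestPairs {k : ℕ} (n : ℕ) (hk : 0 < k) : l k n = (largestPairs k n).ncard :=
  (Nat.card_congr (Equiv.ofBijective _ (pairToPartition_bijective hk))).symm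

lemma finite_largestPairs {k : ℕ} (n : ℕ) (hk : 0 < k) : (largestPairs k n).Finite :=
  Finite.of_injective _ (pairToPartition_bijective hk).injective

/-- Splitting according to whether one less than the largest part is itself a part. -/
lemma largestPairs_add {j n : ℕ} (hn : 1 ≤ n) :
    largestPairs j (n + j) =
      (fun x : ℕ × Finset ℕ => (x.1 + 1, insert x.1 x.2)) '' largestPairs (j + 1) n ∪
        (fun x : ℕ × Finset ℕ => (x.1 + 1, x.2)) '' largestPairs j n := by
  ext ⟨M, T⟩
  constructor
  · rintro ⟨hM, hT, hsum⟩
    dsimp only at hM hT hsum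
    obtain ⟨m, rfl⟩ := Nat.exists_eq_succ_of_ne_zero hM.ne'
    rw [Nat.succ_eq_add_one] at *
    have hm : 0 < m := by
      -- With largest part `1` there is no other part, so the sum is `j < n + j`.
      rcases Nat.eq_zero_or_pos m with rfl | h
      · have hT0 : T = ∅ := Finset.eq_empty_of_forall_notMem fun a ha => by
          have := hT a ha
          omega
        subst hT0
        simp at hsum
        omega
      · exact h
    by_cases hmT : m ∈ T
    · left
      refine ⟨(m, T.erase m), ⟨hm, ?_, ?_⟩, ?_⟩
      · intro a ha
        obtain ⟨h1, h2⟩ := Finset.mem_erase.1 ha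
        have := hT a h2
        dsimp only
        omega
      · have := Finset.add_sum_erase T (fun a => a) hmT
        dsimp only at this ⊢
        linarith
      · simp [Finset.insert_erase hmT]
    · right
      refine ⟨(m, T), ⟨hm, ?_, ?_⟩, rfl⟩
      · intro a ha
        have := hT a ha
        have : a ≠ m := fun h => hmT (h ▸ ha)
        dsimp only
        omega
      · dsimp only
        linarith
  · rintro (⟨⟨m, S⟩, ⟨hm, hS, hsum⟩, h⟩ | ⟨⟨m, S⟩, ⟨hm, hS, hsum⟩, h⟩)
    · obtain ⟨rfl, rfl⟩ := Prod.mk.inj h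
      dsimp only at hm hS hsum
      have hmS : m ∉ S := fun h => lt_irrefl _ (hS m h).2
      refine ⟨Nat.succ_pos _, ?_, ?_⟩
      · intro a ha
        dsimp only at ha ⊢
        rcases Finset.mem_insert.1 ha with rfl | ha
        · omega
        · have := hS a ha
          omega
      · dsimp only
        rw [Finset.sum_insert hmS]
        linarith
    · obtain ⟨rfl, rfl⟩ := Prod.mk.inj h
      dsimp only at hm hS hsum
      refine ⟨Nat.succ_pos _, ?_, ?_⟩
      · intro a ha
        have := hS a ha
        dsimp only
        omega
      · dsimp only
        linarith

lemma ncard_largestPairs_add {j n : ℕ} (hj : 0 < j) (hn : 1 ≤ n) :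
    (largestPairs j (n + j)).ncard =
      (largestPairs (j + 1) n).ncard + (largestPairs j n).ncard := by
  rw [largestPairs_add hn, Set.ncard_union_eq _ ((finite_largestPairs n j.succ_pos).image _)
    ((finite_largestPairs n hj).image _), Set.InjOn.ncard_image, Set.InjOn.ncard_image]
  · rintro ⟨m, S⟩ - ⟨m', S'⟩ - h
    simpa using h
  · rintro ⟨m, S⟩ ⟨-, hS, -⟩ ⟨m', S'⟩ ⟨-, hS', -⟩ h
    obtain ⟨h1, h2⟩ := Prod.mk.inj h
    obtain rfl : m = m' := Nat.succ_injective h1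
    have hmS : m ∉ S := fun h => lt_irrefl _ (hS m h).2
    have hmS' : m ∉ S' := fun h => lt_irrefl _ (hS' m h).2
    have h3 := congrArg (fun T => Finset.erase T m) h2
    simp only [Finset.erase_insert hmS, Finset.erase_insert hmS'] at h3
    rw [h3]
  · rw [Set.disjoint_left]
    rintro _ ⟨⟨m, S⟩, -, rfl⟩ ⟨⟨m', S'⟩, ⟨-, hS', -⟩, h⟩
    obtain ⟨h1, h2⟩ := Prod.mk.inj h
    obtain rfl : m' = m := Nat.succ_injective h1
    dsimp only at h2 hS'
    exact lt_irrefl _ (hS' m' (h2 ▸ Finset.mem_insert_self _ _)).2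

theorem l_recurrence (k n : ℕ) (hk : 2 ≤ k) (hn : 1 ≤ n) :
    l k n + l (k - 1) n = l (k - 1) (n + k - 1) := by
  obtain ⟨j, rfl⟩ : ∃ j, k = j + 1 := ⟨k - 1, by omega⟩
  have hj : 0 < j := by omega
  rw [show n + (j + 1) - 1 = n + j by omega, Nat.add_sub_cancel, card_largestPairs _ hj,
    card_largestPairs _ hj, card_largestPairs _ j.succ_pos, ncard_largestPairs_add hj hn]
end

section
/- For all integers k ≥ 2 and n ≥ 1, there is a bijection between the disjoint union L_k(n) ⊔ L_{k-1}(n) and L_{k-1}(n+k-1), obtained by increasing the k−1 copies of the largest part by one. -/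
/-- Pairs `(m, S)` encoding the partition of `n` with largest part `m`, repeated `k` times, and
with the elements of `S` as its other parts. -/
def LargestCode (k n : ℕ) : Type :=
  {x : ℕ × Finset ℕ // 0 < x.1 ∧ (∀ a ∈ x.2, 0 < a ∧ a < x.1) ∧ k * x.1 + ∑ a ∈ x.2, a = n}

/-- The partition consisting of `k` copies of `m` and one copy of each element of `S`. -/
def LargestCode.toPartition {k n : ℕ} (x : LargestCode k n) : n.Partition where
  parts := Multiset.replicate k x.1.1 + x.1.2.val
  parts_pos := by
    intro i hi
    rcases Multiset.mem_add.1 hi with h | h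
    · rw [Multiset.eq_of_mem_replicate h]
      exact x.2.1
    · exact (x.2.2.1 i h).1
  parts_sum := by
    have h := x.2.2.2
    rwa [Multiset.sum_add, Multiset.sum_replicate, smul_eq_mul, Finset.sum_val]

theorem LargestCode.count_parts {k n : ℕ} (x : LargestCode k n) (a : ℕ) :
    x.toPartition.parts.count a =
      (if a = x.1.1 then k else 0) + (if a ∈ x.1.2 then 1 else 0) := by
  have h : x.1.2.val.count a = if a ∈ x.1.2 then 1 else 0 :=
    Multiset.count_eq_of_nodup x.1.2.nodup
  simp only [toPartition, Multiset.count_add, Multiset.count_replicate, h, eq_comm]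

theorem LargestCode.mem_parts {k n : ℕ} (hk : 0 < k) (x : LargestCode k n) (a : ℕ) :
    a ∈ x.toPartition.parts ↔ a = x.1.1 ∨ a ∈ x.1.2 := by
  rw [← Multiset.count_pos, x.count_parts]
  split_ifs <;> simp_all

theorem LargestCode.isLargestRep {k n : ℕ} (hk : 0 < k) (x : LargestCode k n) :
    IsLargestRep k x.toPartition := by
  have hlt : ∀ a ∈ x.1.2, a < x.1.1 := fun a ha => (x.2.2.1 a ha).2
  have hnot : x.1.1 ∉ x.1.2 := fun h => lt_irrefl _ (hlt _ h)
  refine ⟨x.1.1, (x.mem_parts hk _).2 (Or.inl rfl), ?_, ?_, ?_⟩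
  · intro a ha
    rcases (x.mem_parts hk a).1 ha with h | h
    · exact h.le
    · exact (hlt a h).le
  · simp [x.count_parts, hnot]
  · intro a ha hne
    have h : a ∈ x.1.2 := ((x.mem_parts hk a).1 ha).resolve_left hne
    simp [x.count_parts, hne, h]

theorem LargestCode.toPartition_injective {k n : ℕ} (hk : 0 < k) :
    Function.Injective (LargestCode.toPartition : LargestCode k n → n.Partition) := by
  intro x y hxy
  have hmem : ∀ a, (a = x.1.1 ∨ a ∈ x.1.2) ↔ (a = y.1.1 ∨ a ∈ y.1.2) := fun a => by
    rw [← x.mem_parts hk, ← y.mem_parts hk, hxy]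
  have hx : ∀ a ∈ x.1.2, a < x.1.1 := fun a ha => (x.2.2.1 a ha).2
  have hy : ∀ a ∈ y.1.2, a < y.1.1 := fun a ha => (y.2.2.1 a ha).2
  have hm : x.1.1 = y.1.1 := by
    have h1 := (hmem x.1.1).1 (Or.inl rfl)
    have h2 := (hmem y.1.1).2 (Or.inl rfl)
    grind
  refine Subtype.ext (Prod.ext hm (Finset.ext fun a => ?_))
  have := hmem a
  grind

theorem LargestCode.exists_toPartition {k n : ℕ} {p : n.Partition}
    (hp : IsLargestRep k p) : ∃ x : LargestCode k n, x.toPartition = p := by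
  obtain ⟨m, hm, hmax, hcount, hone⟩ := hp
  have hparts : Multiset.replicate k m + (p.parts.toFinset.erase m).val = p.parts := by
    ext a
    rw [Multiset.count_add, Multiset.count_replicate,
      Multiset.count_eq_of_nodup (Finset.nodup _)]
    simp only [Finset.mem_val, Finset.mem_erase, Multiset.mem_toFinset]
    by_cases ham : a = m
    · subst ham
      simp [hcount]
    · by_cases ha : a ∈ p.parts
      · simp [Ne.symm ham, ham, ha, hone a ha ham]
      · simp [Ne.symm ham, ha]
  refine ⟨⟨(m, p.parts.toFinset.erase m), p.parts_pos hm, ?_, ?_⟩, ?_⟩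
  · intro a ha
    obtain ⟨hne, ha⟩ := Finset.mem_erase.1 ha
    rw [Multiset.mem_toFinset] at ha
    exact ⟨p.parts_pos ha, lt_of_le_of_ne (hmax a ha) hne⟩
  · have h := congrArg Multiset.sum hparts
    rw [Multiset.sum_add, Multiset.sum_replicate, smul_eq_mul, p.parts_sum, Finset.sum_val] at h
    exact h
  · exact Nat.Partition.ext hparts

/-- For `k ≥ 1`, the codes are in bijection with the partitions in `L_k(n)`. -/
noncomputable def largestCodeEquiv {k : ℕ} (n : ℕ) (hk : 0 < k) :
    LargestCode k n ≃ {p : n.Partition // IsLargestRep k p} :=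
  Equiv.ofBijective (fun x => ⟨x.toPartition, x.isLargestRep hk⟩)
    ⟨fun _ _ h => LargestCode.toPartition_injective hk (congrArg Subtype.val h),
      fun p => (LargestCode.exists_toPartition p.2).imp fun _ hx => Subtype.ext hx⟩

/-- Raising `j` copies of the largest part by one, on codes with `j + 1` copies of it: the
remaining copy joins the other parts. -/
def LargestCode.raiseLeft {j n : ℕ} (x : LargestCode (j + 1) n) : LargestCode j (n + j) :=
  ⟨(x.1.1 + 1, insert x.1.1 x.1.2), Nat.succ_pos _, by
    have h0 := x.2.1
    have hS := x.2.2.1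
    intro a ha
    rcases Finset.mem_insert.1 ha with rfl | h
    · exact ⟨h0, Nat.lt_succ_self _⟩
    · exact ⟨(hS a h).1, (hS a h).2.trans (Nat.lt_succ_self _)⟩, by
    have hnot : x.1.1 ∉ x.1.2 := fun h => lt_irrefl _ (x.2.2.1 _ h).2
    have h := x.2.2.2
    simp only [Finset.sum_insert hnot]
    linarith⟩

/-- Raising all `j` copies of the largest part by one. -/
def LargestCode.raiseRight {j n : ℕ} (x : LargestCode j n) : LargestCode j (n + j) :=
  ⟨(x.1.1 + 1, x.1.2), Nat.succ_pos _,
    fun a ha => ⟨(x.2.2.1 a ha).1, (x.2.2.1 a ha).2.trans (Nat.lt_succ_self _)⟩, by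
    have h := x.2.2.2
    simp only
    linarith⟩

theorem LargestCode.raise_bijective {j n : ℕ} (hn : 1 ≤ n) :
    Function.Bijective (Sum.elim raiseLeft raiseRight :
      LargestCode (j + 1) n ⊕ LargestCode j n → LargestCode j (n + j)) := by
  have hnot : ∀ {i : ℕ} (x : LargestCode i n), x.1.1 ∉ x.1.2 :=
    fun x h => lt_irrefl _ (x.2.2.1 _ h).2
  constructor
  · rintro (x | x) (y | y) h
    all_goals
      have h1 := congrArg (fun z => z.1.1) h
      have h2 := congrArg (fun z => z.1.2) h
      simp only [Sum.elim_inl, Sum.elim_inr, raiseLeft, raiseRight, Nat.add_right_cancel_iff]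
        at h1 h2
    · refine congrArg Sum.inl (Subtype.ext (Prod.ext h1 ?_))
      rw [← Finset.erase_insert (hnot x), h2, h1, Finset.erase_insert (hnot y)]
    · exact absurd (h1 ▸ h2 ▸ Finset.mem_insert_self _ _) (hnot y)
    · exact absurd (h1 ▸ h2 ▸ Finset.mem_insert_self _ _) (hnot x)
    · exact congrArg Sum.inr (Subtype.ext (Prod.ext h1 h2))
  · rintro ⟨⟨M, T⟩, hM, hT, hsum⟩
    simp only at hM hT hsum
    obtain ⟨m, rfl⟩ : ∃ m, M = m + 1 := ⟨M - 1, by omega⟩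
    have hm : 0 < m := by
      by_contra h0
      obtain rfl : m = 0 := by omega
      have : T = ∅ := Finset.eq_empty_of_forall_notMem fun a ha => by
        have := hT a ha
        omega
      subst this
      simp at hsum
      omega
    by_cases hmT : m ∈ T
    · refine ⟨Sum.inl ⟨(m, T.erase m), hm, ?_, ?_⟩, ?_⟩
      · intro a ha
        obtain ⟨hne, ha⟩ := Finset.mem_erase.1 ha
        have := hT a ha
        simp only
        omega
      · have := Finset.add_sum_erase T (fun a => a) hmT
        simp only at this ⊢
        linarith
      · exact Subtype.ext (Prod.ext rfl (Finset.insert_erase hmT))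
    · refine ⟨Sum.inr ⟨(m, T), hm, ?_, ?_⟩, rfl⟩
      · intro a ha
        have := hT a ha
        have hne : a ≠ m := fun h => hmT (h ▸ ha)
        simp only
        omega
      · simp only
        linarith

theorem largest_bijection (k n : ℕ) (hk : 2 ≤ k) (hn : 1 ≤ n) :
    Nonempty
      (({p : n.Partition // IsLargestRep k p} ⊕
          {p : n.Partition // IsLargestRep (k - 1) p}) ≃
        {p : (n + k - 1).Partition // IsLargestRep (k - 1) p}) := by
  obtain ⟨j, rfl⟩ : ∃ j, k = j + 1 := ⟨k - 1, by omega⟩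
  have hj : 0 < j := by omega
  exact ⟨((largestCodeEquiv n j.succ_pos).symm.sumCongr (largestCodeEquiv n hj).symm).trans
    ((Equiv.ofBijective _ (LargestCode.raise_bijective hn)).trans (largestCodeEquiv (n + j) hj))⟩
end

section
/- For every integer n ≥ 1, the number of partitions of n in which the largest part occurs exactly twice and all other parts are distinct satisfies ℓ_2(n) + q(n) = q(n+1); equivalently, ℓ_2(n) = q(n+1) − q(n). In particular, q(n) ≤ q(n+1). -/
/-- `s` consists of a part `m ≥ 1` together with distinct parts that are all at most `m`. -/
def IsTopSplit (s : Multiset ℕ) (m : ℕ) (t : Multiset ℕ) : Prop :=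
  s = m ::ₘ t ∧ 1 ≤ m ∧ t.Nodup ∧ ∀ a ∈ t, a ≤ m

/-- Raise one copy of the largest element by one. -/
def raiseTop (s : Multiset ℕ) : Multiset ℕ := (s.sup + 1) ::ₘ s.erase s.sup

/-- Lower one copy of the largest element by one (truncated at zero). -/
def lowerTop (s : Multiset ℕ) : Multiset ℕ := (s.sup - 1) ::ₘ s.erase s.sup

lemma sup_cons_of_le {m : ℕ} {t : Multiset ℕ} (h : ∀ a ∈ t, a ≤ m) : (m ::ₘ t).sup = m := by
  rw [Multiset.sup_cons]
  exact sup_eq_left.2 (Multiset.sup_le.2 h)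

lemma raiseTop_cons {m : ℕ} {t : Multiset ℕ} (h : ∀ a ∈ t, a ≤ m) :
    raiseTop (m ::ₘ t) = (m + 1) ::ₘ t := by
  simp [raiseTop, sup_cons_of_le h, -Multiset.sup_cons]

lemma lowerTop_cons {m : ℕ} {t : Multiset ℕ} (h : ∀ a ∈ t, a ≤ m) :
    lowerTop ((m + 1) ::ₘ t) = m ::ₘ t := by
  simp [lowerTop, sup_cons_of_le (fun a ha => (h a ha).trans (Nat.le_succ m)),
    -Multiset.sup_cons]

lemma exists_max_mem {s : Multiset ℕ} (h : s ≠ 0) : ∃ m ∈ s, ∀ a ∈ s, a ≤ m := by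
  obtain ⟨m, hm, hmax⟩ := s.toFinset.exists_max_image id (by simpa using h)
  exact ⟨m, by simpa using hm, fun a ha => hmax a (by simpa using ha)⟩

lemma parts_ne_zero {n : ℕ} (hn : 1 ≤ n) (p : n.Partition) : p.parts ≠ 0 := by
  intro h
  have := p.parts_sum
  simp [h] at this
  omega

lemma nodup_or_largestRep_iff {n : ℕ} (hn : 1 ≤ n) (p : n.Partition) :
    (IsLargestRep 2 p ∨ p.parts.Nodup) ↔ ∃ m t, IsTopSplit p.parts m t := by
  constructor
  · rintro (⟨m, hm, hmax, hc, h1⟩ | hnd)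
    · refine ⟨m, p.parts.erase m, (Multiset.cons_erase hm).symm, p.parts_pos hm, ?_,
        fun a ha => hmax a (Multiset.mem_of_mem_erase ha)⟩
      rw [Multiset.nodup_iff_count_le_one]
      intro a
      by_cases ham : a = m
      · subst ham
        simp [hc]
      · rw [Multiset.count_erase_of_ne ham]
        by_cases ha : a ∈ p.parts
        · exact (h1 a ha ham).le
        · simp [Multiset.count_eq_zero_of_notMem ha]
    · obtain ⟨m, hm, hmax⟩ := exists_max_mem (parts_ne_zero hn p)
      exact ⟨m, p.parts.erase m, (Multiset.cons_erase hm).symm, p.parts_pos hm, hnd.erase m,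
        fun a ha => hmax a (Multiset.mem_of_mem_erase ha)⟩
  · rintro ⟨m, t, hs, -, hnd, hle⟩
    by_cases hm : m ∈ t
    · refine Or.inl ⟨m, by simp [hs], ?_, ?_, ?_⟩
      · intro a ha
        rw [hs, Multiset.mem_cons] at ha
        rcases ha with rfl | ha
        · exact le_rfl
        · exact hle a ha
      · rw [hs, Multiset.count_cons_self, Multiset.count_eq_one_of_mem hnd hm]
      · intro a ha ham
        rw [hs, Multiset.mem_cons] at ha
        rw [hs, Multiset.count_cons_of_ne ham]
        exact Multiset.count_eq_one_of_mem hnd (ha.resolve_left ham)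
    · exact Or.inr (by rw [hs]; exact Multiset.nodup_cons.2 ⟨hm, hnd⟩)

lemma nodup_succ_iff {n : ℕ} (hn : 1 ≤ n) (p : (n + 1).Partition) :
    p.parts.Nodup ↔ ∃ m t, p.parts = (m + 1) ::ₘ t ∧ IsTopSplit (m ::ₘ t) m t := by
  constructor
  · intro hnd
    obtain ⟨M, hM, hmax⟩ := exists_max_mem (parts_ne_zero (by omega) p)
    obtain ⟨t, ht⟩ := Multiset.exists_cons_of_mem hM
    have hnd' := hnd
    rw [ht, Multiset.nodup_cons] at hnd'
    have hlt : ∀ a ∈ t, a < M := fun a ha =>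
      lt_of_le_of_ne (hmax a (by simp [ht, ha])) (fun h => hnd'.1 (h ▸ ha))
    have hM2 : 2 ≤ M := by
      by_contra hcon
      -- Otherwise `t` is empty and the total is at most `1`, whereas `n + 1 ≥ 2`.
      have ht0 : t = 0 := Multiset.eq_zero_of_forall_notMem fun a ha => by
        have h1 := hlt a ha
        have h2 : 0 < a := p.parts_pos (by simp [ht, ha])
        omega
      have := p.parts_sum
      simp [ht, ht0] at this
      omega
    obtain ⟨m, rfl⟩ : ∃ m, M = m + 1 := ⟨M - 1, by omega⟩
    exact ⟨m, t, ht, rfl, by omega, hnd'.2, fun a ha => Nat.lt_succ_iff.1 (hlt a ha)⟩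
  · rintro ⟨m, t, hs, -, -, hnd, hle⟩
    rw [hs, Multiset.nodup_cons]
    exact ⟨fun h => absurd (hle _ h) (by omega), hnd⟩

lemma not_nodup_of_largestRep {n : ℕ} {p : n.Partition} (h : IsLargestRep 2 p) :
    ¬ p.parts.Nodup := by
  obtain ⟨m, -, -, hc, -⟩ := h
  intro hnd
  have := Multiset.nodup_iff_count_le_one.1 hnd m
  omega

/-- Raising one copy of the largest part by one, as a bijection. -/
def raiseEquiv (n : ℕ) :
    {p : n.Partition // ∃ m t, IsTopSplit p.parts m t} ≃
      {p : (n + 1).Partition // ∃ m t, p.parts = (m + 1) ::ₘ t ∧ IsTopSplit (m ::ₘ t) m t} where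
  toFun p := ⟨⟨raiseTop p.1.parts, by
      obtain ⟨p, m, t, hs, hm, hnd, hle⟩ := p
      intro i hi
      rw [hs, raiseTop_cons hle, Multiset.mem_cons] at hi
      rcases hi with rfl | hi
      · omega
      · exact p.parts_pos (by simp [hs, hi]), by
      obtain ⟨p, m, t, hs, hm, hnd, hle⟩ := p
      have := p.parts_sum
      rw [hs, Multiset.sum_cons] at this
      rw [hs, raiseTop_cons hle, Multiset.sum_cons]
      omega⟩, by
      obtain ⟨p, m, t, hs, hm, hnd, hle⟩ := p
      exact ⟨m, t, by simp only [hs, raiseTop_cons hle], rfl, hm, hnd, hle⟩⟩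
  invFun p := ⟨⟨lowerTop p.1.parts, by
      obtain ⟨p, m, t, hs, -, hm, hnd, hle⟩ := p
      intro i hi
      rw [hs, lowerTop_cons hle, Multiset.mem_cons] at hi
      rcases hi with rfl | hi
      · omega
      · exact p.parts_pos (by simp [hs, hi]), by
      obtain ⟨p, m, t, hs, -, hm, hnd, hle⟩ := p
      have := p.parts_sum
      rw [hs, Multiset.sum_cons] at this
      rw [hs, lowerTop_cons hle, Multiset.sum_cons]
      omega⟩, by
      obtain ⟨p, m, t, hs, -, hm, hnd, hle⟩ := p
      exact ⟨m, t, by simp only [hs, lowerTop_cons hle], hm, hnd, hle⟩⟩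
  left_inv p := by
    obtain ⟨p, m, t, hs, hm, hnd, hle⟩ := p
    apply Subtype.ext
    apply Nat.Partition.ext
    simp only [hs, raiseTop_cons hle, lowerTop_cons hle]
  right_inv p := by
    obtain ⟨p, m, t, hs, -, hm, hnd, hle⟩ := p
    apply Subtype.ext
    apply Nat.Partition.ext
    simp only [hs, raiseTop_cons hle, lowerTop_cons hle]

theorem l2_eq (n : ℕ) (hn : 1 ≤ n) :
    l 2 n + q n = q (n + 1) ∧ q n ≤ q (n + 1) := by
  classical
  have key : l 2 n + q n = q (n + 1) := by
    have hdisj : Disjoint (fun p : n.Partition => IsLargestRep 2 p)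
        (fun p : n.Partition => p.parts.Nodup) := by
      rw [Pi.disjoint_iff]
      intro p
      rw [Prop.disjoint_iff, not_and]
      exact not_nodup_of_largestRep
    unfold l q
    rw [← Nat.card_sum, ← Nat.card_congr (subtypeOrEquiv _ _ hdisj),
      Nat.card_congr (Equiv.subtypeEquivRight (nodup_or_largestRep_iff hn)),
      Nat.card_congr (Equiv.subtypeEquivRight (nodup_succ_iff hn))]
    exact Nat.card_congr (raiseEquiv n)
  exact ⟨key, by omega⟩
end
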